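/- arXiv:2402.01272 — 7 statements merged into one kernel-verified Lean document; each statement's English description precedes it below -/
import Mathlib

section
/- Let E be a finite set, let J ⊆ ℕ₀^E be an M-convex set, and let T ⊆ E be such that J is nondegenerate with respect to T, i.e., there exists α ∈ J with α_i = 0 for all i ∈ E∖T. Let J' = {(α_i)_{i∈T} : α ∈ J and α_i = 0 for all i ∈ E∖T} ⊆ ℕ₀^T. Then for every S ⊆ T one has r_J(S) = r_{J'}(S); that is, the restriction of the polymatroid r_J to T equals the polymatroid r_{J'}. -/
/-!
The vectors of `J` that vanish off `T` form a subset of `J`, so it suffices that every `α ∈ J` is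
dominated on `T` by some `γ ∈ J` vanishing off `T` (`exists_dominating`). Fix `β ∈ J` vanishing
off `T`. If `α i > 0` for some `i ∉ T`, then `α i > β i`, and the exchange axiom provides `j` with
`α j < β j` and `α - δ_i + δ_j ∈ J`. As `β j > 0`, this `j` lies in `T`, so the exchange does not
decrease any coordinate in `T` and lowers the total weight off `T` by one. Induction on that
weight gives `γ`.
-/

/-- A subset `J ⊆ ℕ₀^E` is M-convex if for every `i ∈ E` and all `α, β ∈ J` with
`α i > β i` there exists `j ∈ E` with `α j < β j` and `α - δ_i + δ_j ∈ J`. -/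
def MConvexSet {E : Type*} [DecidableEq E] (J : Set (E → ℕ)) : Prop :=
  ∀ α ∈ J, ∀ β ∈ J, ∀ i : E, β i < α i → ∃ j : E, α j < β j ∧
    (fun k => α k - (if k = i then 1 else 0) + (if k = j then 1 else 0)) ∈ J

/-- The rank function `r_J` of an M-convex set: `r_J(S) = max {∑_{i ∈ S} α i : α ∈ J}`. -/
noncomputable def polyRank {E : Type*} (J : Set (E → ℕ)) (S : Finset E) : ℕ :=
  sSup ((fun α : E → ℕ => ∑ i ∈ S, α i) '' J)

/-- Exchanging against `β` moves all weight of `α` off `T` into `T`, without decreasing any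
coordinate in `T`. -/
lemma exists_dominating {E : Type*} [Fintype E] [DecidableEq E]
    {J : Set (E → ℕ)} (hJ : MConvexSet J) {T : Finset E}
    {β : E → ℕ} (hβ : β ∈ J) (hβT : ∀ i ∉ T, β i = 0) (n : ℕ) :
    ∀ α ∈ J, ∑ i ∈ Tᶜ, α i = n → ∃ γ ∈ J, (∀ i ∉ T, γ i = 0) ∧ ∀ i ∈ T, α i ≤ γ i := by
  induction n using Nat.strong_induction_on with
  | _ n ih =>
    intro α hα hn
    by_cases h : ∀ i ∉ T, α i = 0
    · exact ⟨α, hα, h, fun _ _ => le_rfl⟩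
    push Not at h
    obtain ⟨i, hiT, hi⟩ := h
    obtain ⟨j, hj, hmem⟩ := hJ α hα β hβ i (by rw [hβT i hiT]; omega)
    have hjT : j ∈ T := by
      by_contra hc
      rw [hβT j hc] at hj
      omega
    obtain ⟨γ, hγ, hγ0, hγle⟩ := ih _ (by
      rw [← hn]
      refine Finset.sum_lt_sum (fun k hk => ?_) ⟨i, Finset.mem_compl.2 hiT, ?_⟩
      · have : k ≠ j := by
          rintro rfl
          exact Finset.mem_compl.1 hk hjT
        simp [this]
      · have : i ≠ j := by
          rintro rfl
          exact hiT hjT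
        simp only [this, if_true, if_false]
        omega) _ hmem rfl
    refine ⟨γ, hγ, hγ0, fun k hk => le_trans ?_ (hγle k hk)⟩
    have : k ≠ i := by
      rintro rfl
      exact hiT hk
    simp [this]

/-- if `J ⊆ ℕ₀^E` is M-convex and nondegenerate with respect to `T ⊆ E`,
and `J' ⊆ ℕ₀^T` is the set of restrictions to `T` of those `α ∈ J` vanishing off `T`,
then `r_J(S) = r_{J'}(S)` for every `S ⊆ T`. -/
theorem mconvex_restrict_rank {E : Type*} [Fintype E] [DecidableEq E]
    (J : Set (E → ℕ)) (hJ : MConvexSet J) (T : Finset E)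
    (hnd : ∃ α ∈ J, ∀ i ∉ T, α i = 0) :
    ∀ S : Finset E, S ⊆ T →
      polyRank J S =
        polyRank
          {β : {x // x ∈ T} → ℕ |
            ∃ α ∈ J, (∀ i ∉ T, α i = 0) ∧ ∀ i : {x // x ∈ T}, β i = α ↑i}
          (S.subtype (· ∈ T)) := by
  intro S hS
  obtain ⟨β, hβ, hβT⟩ := hnd
  have hsum : ∀ γ : E → ℕ, ∑ i ∈ S.subtype (· ∈ T), γ ↑i = ∑ i ∈ S, γ i := fun γ =>
    Finset.sum_subtype_of_mem γ hS
  unfold polyRank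
  -- Mutual domination yields equal suprema with no boundedness of `J` required.
  apply csSup_eq_csSup_of_forall_exists_le
  · rintro _ ⟨α, hα, rfl⟩
    obtain ⟨γ, hγ, hγ0, hle⟩ := exists_dominating hJ hβ hβT _ α hα rfl
    refine ⟨_, ⟨fun i => γ ↑i, ⟨γ, hγ, hγ0, fun _ => rfl⟩, rfl⟩, ?_⟩
    simp only [hsum]
    exact Finset.sum_le_sum fun i hi => hle i (hS hi)
  · rintro _ ⟨δ, ⟨γ, hγ, -, hδ⟩, rfl⟩
    refine ⟨_, ⟨γ, hγ, rfl⟩, ?_⟩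
    simp only [hδ, hsum]
    exact le_rfl
end

section
/- Let E = E₁ ∪ E₂ be a finite set and let P ∈ ℝ[x_i : i ∈ E] be a polynomial whose support J = supp(P) is M-convex. For k = 1,2 let P_k ∈ ℝ[x_i : i ∈ E_k] be the polynomial obtained from P by setting x_i = 0 for all i ∉ E_k, and let J_k = supp(P_k). If P₁ and P₂ are both not identically zero, then J₁ and J₂ are M-convex and the polymatroid r_J is an amalgam of r_{J₁} and r_{J₂}. -/
/-- The support of a multivariate polynomial, as a set of exponent vectors in `ℕ₀^E`. -/
def suppSet {σ : Type*} (P : MvPolynomial σ ℝ) : Set (σ → ℕ) :=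
  (fun m : σ →₀ ℕ => (m : σ → ℕ)) '' ↑P.support

/-- The polynomial obtained from `P` by setting `x i = 0` for all `i ∉ Ek`. -/
noncomputable def restrictTo {σ : Type*} [DecidableEq σ] (Ek : Finset σ)
    (P : MvPolynomial σ ℝ) : MvPolynomial σ ℝ :=
  MvPolynomial.aeval (fun i => if i ∈ Ek then MvPolynomial.X i else 0) P

lemma coeff_restrictTo {σ : Type*} [DecidableEq σ] (Ek : Finset σ)
    (P : MvPolynomial σ ℝ) (m : σ →₀ ℕ) :
    (restrictTo Ek P).coeff m = if m.support ⊆ Ek then P.coeff m else 0 := by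
  induction P using MvPolynomial.induction_on' with
  | monomial u a =>
    have key : restrictTo Ek (MvPolynomial.monomial u a) =
        if u.support ⊆ Ek then MvPolynomial.monomial u a else 0 := by
      unfold restrictTo
      rw [MvPolynomial.aeval_monomial]
      split_ifs with h
      · rw [MvPolynomial.monomial_eq, MvPolynomial.algebraMap_eq]
        congr 1
        refine Finset.prod_congr rfl fun i hi => ?_
        simp [h hi]
      · obtain ⟨i, hi, hiE⟩ := Finset.not_subset.mp h
        rw [Finsupp.prod, Finset.prod_eq_zero hi, mul_zero]
        simp [hiE, Finsupp.mem_support_iff.mp hi]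
    rw [key]
    by_cases hum : u = m
    · subst hum
      split_ifs <;> simp
    · split_ifs <;> simp [MvPolynomial.coeff_monomial, hum]
  | add p q hp hq =>
    have : restrictTo Ek (p + q) = restrictTo Ek p + restrictTo Ek q := by
      simp [restrictTo]
    rw [this, MvPolynomial.coeff_add, hp, hq]
    split_ifs <;> simp

lemma mem_suppSet_restrictTo {σ : Type*} [DecidableEq σ] (Ek : Finset σ)
    (P : MvPolynomial σ ℝ) (α : σ → ℕ) :
    α ∈ suppSet (restrictTo Ek P) ↔ α ∈ suppSet P ∧ ∀ i ∉ Ek, α i = 0 := by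
  have supp_iff (m : σ →₀ ℕ) : m.support ⊆ Ek ↔ ∀ i ∉ Ek, m i = 0 := by
    simp only [Finset.subset_iff, Finsupp.mem_support_iff]
    exact forall_congr' fun i => not_imp_comm
  simp only [suppSet, Set.mem_image, Finset.mem_coe, MvPolynomial.mem_support_iff,
    coeff_restrictTo]
  constructor
  · rintro ⟨m, hm, rfl⟩
    split_ifs at hm with h
    · exact ⟨⟨m, hm, rfl⟩, (supp_iff m).mp h⟩
    · exact absurd rfl hm
  · rintro ⟨⟨m, hm, rfl⟩, h⟩
    exact ⟨m, by rwa [if_pos ((supp_iff m).mpr h)], rfl⟩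

lemma MConvexSet.restrict {σ : Type*} [DecidableEq σ] {Ek : Finset σ}
    {P : MvPolynomial σ ℝ} (hJ : MConvexSet (suppSet P)) :
    MConvexSet (suppSet (restrictTo Ek P)) := by
  intro α hα β hβ i hi
  rw [mem_suppSet_restrictTo] at hα hβ
  obtain ⟨j, hj, hmem⟩ := hJ α hα.1 β hβ.1 i hi
  refine ⟨j, hj, (mem_suppSet_restrictTo _ _ _).mpr ⟨hmem, fun k hk => ?_⟩⟩
  have hkj : k ≠ j := by
    rintro rfl
    have := hβ.2 k hk
    omega
  simp [hα.2 k hk, hkj]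

/-- Every `α` in the support is dominated, as far as sums over `S ⊆ Ek` are concerned, by some
exponent vector vanishing off `Ek`; the proof is by induction on the mass of `α` off `Ek`. -/
lemma exists_restrict_sum_le {σ : Type*} [Fintype σ] [DecidableEq σ] {Ek : Finset σ}
    {P : MvPolynomial σ ℝ} (hJ : MConvexSet (suppSet P))
    {β : σ → ℕ} (hβ : β ∈ suppSet (restrictTo Ek P)) {S : Finset σ} (hS : S ⊆ Ek)
    (n : ℕ) (α : σ → ℕ) (hα : α ∈ suppSet P) (hn : ∑ i ∈ Ekᶜ, α i = n) :
    ∃ γ ∈ suppSet (restrictTo Ek P), ∑ i ∈ S, α i ≤ ∑ i ∈ S, γ i := by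
  induction n using Nat.strong_induction_on generalizing α with
  | _ n ih =>
    by_cases h0 : ∀ i ∉ Ek, α i = 0
    · exact ⟨α, (mem_suppSet_restrictTo _ _ _).mpr ⟨hα, h0⟩, le_rfl⟩
    push Not at h0
    obtain ⟨i, hi, hαi⟩ := h0
    have hβ' := (mem_suppSet_restrictTo _ _ _).mp hβ
    have hβi := hβ'.2 i hi
    obtain ⟨j, hj, hmem⟩ := hJ α hα β hβ'.1 i (by omega)
    have hjE : j ∈ Ek := by
      by_contra hjE
      have := hβ'.2 j hjE
      omega
    have hlt : ∑ k ∈ Ekᶜ, (α k - (if k = i then 1 else 0) + (if k = j then 1 else 0)) < n := by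
      rw [← hn]
      apply Finset.sum_lt_sum
      · intro k hk
        have hkj : k ≠ j := by
          rintro rfl
          exact Finset.mem_compl.mp hk hjE
        simp [hkj]
      · have hij : i ≠ j := by
          rintro rfl
          exact hi hjE
        exact ⟨i, Finset.mem_compl.mpr hi, by simp [hij]; omega⟩
    obtain ⟨γ, hγ, hle⟩ := ih _ hlt _ hmem rfl
    refine ⟨γ, hγ, le_trans (Finset.sum_le_sum fun k hk => ?_) hle⟩
    have hki : k ≠ i := by
      rintro rfl
      exact hi (hS hk)
    simp [hki]

lemma polyRank_restrictTo {σ : Type*} [Fintype σ] [DecidableEq σ] {Ek : Finset σ}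
    {P : MvPolynomial σ ℝ} (hJ : MConvexSet (suppSet P)) (hP : restrictTo Ek P ≠ 0)
    {S : Finset σ} (hS : S ⊆ Ek) :
    polyRank (suppSet P) S = polyRank (suppSet (restrictTo Ek P)) S := by
  have hbdd (Q : MvPolynomial σ ℝ) :
      BddAbove ((fun α : σ → ℕ => ∑ i ∈ S, α i) '' suppSet Q) :=
    ((Q.support.finite_toSet.image _).image _).bddAbove
  obtain ⟨m, hm⟩ := MvPolynomial.support_nonempty.mpr hP
  have hβ : (m : σ → ℕ) ∈ suppSet (restrictTo Ek P) := ⟨m, hm, rfl⟩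
  unfold polyRank
  apply le_antisymm
  · refine csSup_le ⟨_, _, ((mem_suppSet_restrictTo _ _ _).mp hβ).1, rfl⟩ ?_
    rintro _ ⟨α, hα, rfl⟩
    obtain ⟨γ, hγ, hle⟩ := exists_restrict_sum_le hJ hβ hS _ α hα rfl
    exact hle.trans (le_csSup (hbdd _) ⟨γ, hγ, rfl⟩)
  · refine csSup_le_csSup (hbdd _) ⟨_, _, hβ, rfl⟩ (Set.image_mono fun α hα => ?_)
    exact ((mem_suppSet_restrictTo _ _ _).mp hα).1

/-- if `E = E₁ ∪ E₂`, the support `J` of `P` is M-convex and the restrictions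
`P₁, P₂` of `P` to `E₁, E₂` (setting the other variables to `0`) are nonzero, then their
supports `J₁, J₂` are M-convex and `r_J` is an amalgam of `r_{J₁}` and `r_{J₂}`. -/
theorem support_restrict_amalgam {σ : Type*} [Fintype σ] [DecidableEq σ]
    (E₁ E₂ : Finset σ) (hE : E₁ ∪ E₂ = Finset.univ)
    (P : MvPolynomial σ ℝ) (hJ : MConvexSet (suppSet P))
    (h1 : restrictTo E₁ P ≠ 0) (h2 : restrictTo E₂ P ≠ 0) :
    MConvexSet (suppSet (restrictTo E₁ P)) ∧
    MConvexSet (suppSet (restrictTo E₂ P)) ∧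
    (∀ S : Finset σ, S ⊆ E₁ →
      polyRank (suppSet P) S = polyRank (suppSet (restrictTo E₁ P)) S) ∧
    (∀ S : Finset σ, S ⊆ E₂ →
      polyRank (suppSet P) S = polyRank (suppSet (restrictTo E₂ P)) S) := by
  exact ⟨hJ.restrict, hJ.restrict, fun _ hS => polyRank_restrictTo hJ h1 hS,
    fun _ hS => polyRank_restrictTo hJ h2 hS⟩
end

section
/- Let E = E₁ ∪ E₂ be a finite set, E₀ = E₁ ∩ E₂ with 0 ∈ E₀. For k = 0,1,2 let P_k ∈ ℝ[x_i : i ∈ E_k] be a nonzero homogeneous stable polynomial such that P₀ is obtained from P_k (k=1,2) by setting x_i = 0 for all i ∉ E₀. For k = 0,1,2 let H_k be obtained from P_k by substituting x₀ + x_i for x_i for every i ∈ E₀∖{0}, and let Q_k = H_k|_{x₀=1} ∈ ℝ[x_i : i ∈ E_k∖{0}]. Assume there is a real zero polynomial Q ∈ ℝ[x_i : i ∈ E∖{0}] such that for k = 1,2 setting x_i = 0 for all i ∉ E_k∖{0} in Q yields Q_k. Then the polymatroids r_{supp(P₁)} and r_{supp(P₂)} have an amalgam. -/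
/-!
Homogenize the common real zero extension `Q` with respect to `x e₀` in a degree `c + d`, where `d`
is the common degree of `P₁` and `P₂`, and undo the shift `x i ↦ x e₀ + x i`. The resulting
homogeneous polynomial `A` (`amalgPoly`) is hyperbolic with respect to `e = 1_{E₁ ∩ E₂}` because `Q`
is a real zero polynomial, and on the coordinate subspace of `E_k` it equals `x e₀ ^ c * P_k`
(`aeval_amalgPoly_eq`). Since `P_k` is stable, every unit vector of `E_k` therefore lies in the
closed hyperbolicity cone of `A`. By convexity of that cone (`tube_of_hyperbolic`, resting on the
continuity argument `tube_step`) `A` has no zero whose imaginary part is nonnegative and positive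
on `E₁ ∩ E₂`; this property is called `TubeStable`.

For a tube-stable homogeneous polynomial, `|A|` is monotone on the nonnegative orthant and satisfies
the Rayleigh inequality `∂_u ∂_v log |A| ≤ 0`. Integrating it (`TubeStable.submod`) and letting the
directions go to infinity shows that `r S = deg_t A (e + t 1_S)` is a polymatroid
(`TubeStable.dirRank_polymatroid`). For `S ⊆ E_k` this degree is `r_{supp P_k}(S)`, plus `c` if
`e₀ ∈ S` (`dirRank_amalgPoly`, `TubeStable.dirRank_indVec`). Removing the excess `c` at `e₀`
(`isPolymatroidOn_reduce`) produces the amalgam.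
-/

/-- `P` is stable: it has no zero `z ∈ ℂ^E` with all imaginary parts positive. -/
def IsStablePoly {σ : Type*} (P : MvPolynomial σ ℝ) : Prop :=
  ∀ z : σ → ℂ, (∀ i, 0 < (z i).im) → MvPolynomial.aeval z P ≠ 0

/-- `P` is hyperbolic with respect to `e`: for every `v ∈ ℝ^E` the univariate polynomial
`t ↦ P (t • e + v)` has only real zeros. -/
def IsHyperbolicAt {σ : Type*} (P : MvPolynomial σ ℝ) (e : σ → ℝ) : Prop :=
  ∀ v : σ → ℝ, ∀ t : ℂ,
    MvPolynomial.aeval (fun i => t * (e i : ℂ) + (v i : ℂ)) P = 0 → t.im = 0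

/-- The hyperbolicity cone `Λ(P, e)`: those `v` such that `t ↦ P (t • e + v)` has only
nonnegative zeros. -/
def hypCone {σ : Type*} (P : MvPolynomial σ ℝ) (e : σ → ℝ) : Set (σ → ℝ) :=
  {v | ∀ t : ℂ, MvPolynomial.aeval (fun i => t * (e i : ℂ) + (v i : ℂ)) P = 0 →
    ∃ s : ℝ, 0 ≤ s ∧ t = (s : ℂ)}

/-- The `i`-th unit vector `δ_i ∈ ℝ^E`. -/
def unitVec {σ : Type*} [DecidableEq σ] (i₀ : σ) : σ → ℝ :=
  fun i => if i = i₀ then 1 else 0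

/-- The polynomial obtained from `P` by substituting `x e₀ + x i` for `x i`
for every `i ∈ E₀ \ {e₀}`. -/
noncomputable def shiftSub {σ : Type*} [DecidableEq σ] (E₀ : Finset σ) (e₀ : σ)
    (P : MvPolynomial σ ℝ) : MvPolynomial σ ℝ :=
  MvPolynomial.aeval
    (fun i => if i ∈ E₀ ∧ i ≠ e₀ then MvPolynomial.X e₀ + MvPolynomial.X i
      else MvPolynomial.X i) P

/-- `Q` is a real zero polynomial: for every `v ∈ ℝ^E` the univariate polynomial
`t ↦ Q (t • v)` has only real zeros. -/
def IsRealZero {σ : Type*} (Q : MvPolynomial σ ℝ) : Prop :=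
  ∀ v : σ → ℝ, ∀ t : ℂ,
    MvPolynomial.aeval (fun i => t * (v i : ℂ)) Q = 0 → t.im = 0

/-- The polynomial obtained from `P` by setting the variable `x e₀` equal to `1`. -/
noncomputable def setVarOne {σ : Type*} [DecidableEq σ] (e₀ : σ)
    (P : MvPolynomial σ ℝ) : MvPolynomial σ ℝ :=
  MvPolynomial.aeval (fun i => if i = e₀ then 1 else MvPolynomial.X i) P

/-- `r` is a polymatroid on the ground set `E`. -/
def IsPolymatroidOn {σ : Type*} [DecidableEq σ] (E : Finset σ) (r : Finset σ → ℕ) : Prop :=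
  r ∅ = 0 ∧ (∀ S T : Finset σ, S ⊆ T → T ⊆ E → r S ≤ r T) ∧
    ∀ S T : Finset σ, S ⊆ E → T ⊆ E → r (S ∪ T) + r (S ∩ T) ≤ r S + r T

/-! ### Restrictions of polynomials to lines -/

open MvPolynomial in
theorem aeval_scale {σ K : Type*} [CommRing K] [Algebra ℝ K] {P : MvPolynomial σ ℝ} {N : ℕ}
    (hP : P.IsHomogeneous N) (c : K) (z : σ → K) :
    aeval (fun i => c * z i) P = c ^ N * aeval z P := by
  rw [aeval_def, aeval_def, eval₂_eq, eval₂_eq, Finset.mul_sum]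
  refine Finset.sum_congr rfl fun d hd => ?_
  have h : d.degree = N := by
    by_contra h
    exact (mem_support_iff.1 hd) (hP.coeff_eq_zero h)
  rw [← h, Finsupp.degree_apply, ← Finset.prod_pow_eq_pow_sum]
  simp only [mul_pow, Finset.prod_mul_distrib]
  ring

open MvPolynomial in
theorem aeval_congr_vars {σ K : Type*} [CommRing K] [Algebra ℝ K] {P : MvPolynomial σ ℝ}
    {z w : σ → K} (h : ∀ i ∈ P.vars, z i = w i) : aeval z P = aeval w P :=
  eval₂Hom_congr' rfl (fun i hi _ => h i hi) rfl

theorem aeval_ofReal {σ : Type*} (P : MvPolynomial σ ℝ) (z : σ → ℝ) :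
    MvPolynomial.aeval (fun i => (z i : ℂ)) P = ((MvPolynomial.aeval z P : ℝ) : ℂ) := by
  have := MvPolynomial.aeval_algebraMap_apply (R := ℝ) ℂ z P
  simpa [Function.comp_def] using this

/-- The univariate polynomial `t ↦ P (w + t • v)`, for a real direction `v` and a base point `w`
with entries in any real algebra. -/
noncomputable def linePoly {σ K : Type*} [CommRing K] [Algebra ℝ K] (w : σ → K) (v : σ → ℝ) :
    MvPolynomial σ ℝ →ₐ[ℝ] Polynomial K :=
  MvPolynomial.aeval
    (fun i => Polynomial.C (w i) + Polynomial.C (algebraMap ℝ K (v i)) * Polynomial.X)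

theorem linePoly_eval {σ K : Type*} [CommRing K] [Algebra ℝ K] (w : σ → K) (v : σ → ℝ)
    (P : MvPolynomial σ ℝ) (t : K) :
    (linePoly w v P).eval t = MvPolynomial.aeval (fun i => w i + t * algebraMap ℝ K (v i)) P := by
  induction P using MvPolynomial.induction_on with
  | C a => simp [linePoly]
  | add p q hp hq => simp [hp, hq]
  | mul_X p i hp => simp only [map_mul, Polynomial.eval_mul, hp]; simp [linePoly, mul_comm t]

/-- The directional derivative of `P` along `v`. -/
noncomputable def dirDeriv {σ : Type*} (v : σ → ℝ) (P : MvPolynomial σ ℝ) : MvPolynomial σ ℝ :=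
  MvPolynomial.mkDerivation ℝ (fun i => (MvPolynomial.C (v i) : MvPolynomial σ ℝ)) P

theorem linePoly_derivative {σ K : Type*} [CommRing K] [Algebra ℝ K] (w : σ → K) (v : σ → ℝ)
    (P : MvPolynomial σ ℝ) :
    Polynomial.derivative (linePoly w v P) = linePoly w v (dirDeriv v P) := by
  induction P using MvPolynomial.induction_on with
  | C a => simp [linePoly, dirDeriv, IsScalarTower.algebraMap_apply ℝ K (Polynomial K)]
  | add p q hp hq => simp only [map_add, hp, hq, dirDeriv]
  | mul_X p i hp =>
    have h1 : linePoly w v (MvPolynomial.X i)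
        = Polynomial.C (w i) + Polynomial.C (algebraMap ℝ K (v i)) * Polynomial.X := by
      simp [linePoly]
    have h2 : linePoly w v (MvPolynomial.C (v i)) = Polynomial.C (algebraMap ℝ K (v i)) := by
      simp [linePoly, IsScalarTower.algebraMap_apply ℝ K (Polynomial K)]
    simp only [map_mul, Polynomial.derivative_mul, hp, dirDeriv, Derivation.leibniz,
      MvPolynomial.mkDerivation_X, map_add, smul_eq_mul, h1, h2]
    simp only [Polynomial.derivative_C, Polynomial.derivative_X]
    ring

/-- If every root of `p` is at least as close to `a` as to `b`, then `‖p a‖ ≤ ‖p b‖`. -/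
theorem norm_eval_le_of_roots (p : Polynomial ℂ) (a b : ℂ)
    (h : ∀ r, p.eval r = 0 → ‖a - r‖ ≤ ‖b - r‖) : ‖p.eval a‖ ≤ ‖p.eval b‖ := by
  by_cases hp : p = 0
  · simp [hp]
  have hs := IsAlgClosed.splits p
  rw [hs.eval_eq_prod_roots, hs.eval_eq_prod_roots, norm_mul, norm_mul]
  refine mul_le_mul_of_nonneg_left ?_ (norm_nonneg _)
  have key : ∀ m : Multiset ℂ, (∀ r ∈ m, ‖a - r‖ ≤ ‖b - r‖) →
      ‖(m.map (a - ·)).prod‖ ≤ ‖(m.map (b - ·)).prod‖ := by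
    intro m
    induction m using Multiset.induction_on with
    | empty => simp
    | cons x m ih =>
      intro hm
      simp only [Multiset.map_cons, Multiset.prod_cons, norm_mul]
      exact mul_le_mul (hm x (by simp)) (ih fun r hr => hm r (by simp [hr])) (norm_nonneg _)
        (norm_nonneg _)
  exact key _ fun r hr => h r (Polynomial.isRoot_of_mem_roots hr)

/-- If all roots of `p` lie in the closed lower half-plane and `p 0 ≠ 0`, then `p'(0) / p(0)`
lies in the closed lower half-plane. -/
theorem im_logDeriv_nonpos (p : Polynomial ℂ) (h0 : p.eval 0 ≠ 0)
    (h : ∀ r, p.eval r = 0 → r.im ≤ 0) : (p.derivative.eval 0 / p.eval 0).im ≤ 0 := by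
  have hs := IsAlgClosed.splits p
  have key : ∀ m : Multiset ℂ, (∀ r ∈ m, r.im ≤ 0) → (∀ r ∈ m, r ≠ 0) →
      ((Polynomial.derivative (m.map (Polynomial.X - Polynomial.C ·)).prod).eval 0
        / ((m.map (Polynomial.X - Polynomial.C ·)).prod).eval 0).im ≤ 0 := by
    intro m
    induction m using Multiset.induction_on with
    | empty => simp
    | cons x m ih =>
      intro h1 h2
      have ih' := ih (fun r hr => h1 r (by simp [hr])) (fun r hr => h2 r (by simp [hr]))
      have hx : x ≠ 0 := h2 x (by simp)
      have hx1 := h1 x (by simp)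
      have hm : ((m.map (Polynomial.X - Polynomial.C ·)).prod).eval 0 ≠ 0 := by
        rw [Polynomial.eval_multiset_prod]
        refine Multiset.prod_ne_zero ?_
        simp only [Multiset.map_map, Multiset.mem_map, not_exists, not_and]
        intro r hr
        simpa using h2 r (by simp [hr])
      set q := (m.map (Polynomial.X - Polynomial.C ·)).prod with hq
      have : (Polynomial.derivative ((Polynomial.X - Polynomial.C x) * q)).eval 0
          / ((Polynomial.X - Polynomial.C x) * q).eval 0
          = -x⁻¹ + q.derivative.eval 0 / q.eval 0 := by
        simp only [Polynomial.derivative_mul, Polynomial.derivative_sub, Polynomial.derivative_X,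
          Polynomial.derivative_C, Polynomial.eval_add, Polynomial.eval_mul, Polynomial.eval_sub,
          Polynomial.eval_X, Polynomial.eval_C, Polynomial.eval_one, Polynomial.eval_zero]
        field_simp
        ring
      simp only [Multiset.map_cons, Multiset.prod_cons]
      rw [this, Complex.add_im, Complex.neg_im, Complex.inv_im]
      have : 0 ≤ -x.im / Complex.normSq x := div_nonneg (by linarith) (Complex.normSq_nonneg _)
      linarith
  have hl : p.leadingCoeff ≠ 0 := by
    intro h
    rw [Polynomial.leadingCoeff_eq_zero] at h
    simp [h] at h0
  have := key p.roots (fun r hr => h r (Polynomial.isRoot_of_mem_roots hr)) (by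
    rintro r hr rfl
    exact h0 (Polynomial.isRoot_of_mem_roots hr))
  rw [hs.eq_prod_roots, Polynomial.derivative_C_mul, Polynomial.eval_C_mul, Polynomial.eval_C_mul,
    mul_div_mul_left _ _ hl]
  exact this

/-- Comparing growth at `+∞` compares degrees. -/
theorem natDegree_le_of_abs_eval_le {p q : Polynomial ℝ} (hq : q ≠ 0) (M : ℝ)
    (h : ∀ t : ℝ, 0 ≤ t → |p.eval t| ≤ M * |q.eval t|) : p.natDegree ≤ q.natDegree := by
  by_contra hlt
  push Not at hlt
  have hd : q.degree < p.degree := Polynomial.degree_lt_degree hlt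
  have ht := Polynomial.abs_div_tendsto_atTop_atTop_of_degree_gt p q hd hq
  have h1 := ht.eventually_gt_atTop M
  have h2 := Polynomial.eventually_atTop_not_isRoot q hq
  obtain ⟨t, ⟨h3, h4⟩, h5⟩ := ((h1.and h2).and (Filter.eventually_ge_atTop 0)).exists
  have hpos : 0 < |q.eval t| := abs_pos.2 h4
  rw [abs_div, lt_div_iff₀ hpos] at h3
  linarith [h t h5]

/-! ### Enlarging nonvanishing tubes -/

open MvPolynomial in
theorem continuous_aeval_comp {σ X : Type*} [TopologicalSpace X] (P : MvPolynomial σ ℝ)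
    (f : X → σ → ℂ) (hf : ∀ i, Continuous fun x => f x i) :
    Continuous fun x => aeval (f x) P := by
  simp only [aeval_def, eval₂_eq]
  fun_prop

/-- Enlarging a nonvanishing tube. Suppose `P` has no zeros on `ℝ^σ + i T`, with `T` convex and
containing `e`, and `u` lies in the open hyperbolicity cone of `P` at `e`. Then `P` has no zeros
on `ℝ^σ + i (T + ℝ≥0 u)`. Along the segment from `i e` to a point of the tube, the roots of
`s ↦ P (A + s u)` never become real, and they start in the lower half-plane. -/
theorem tube_step {σ : Type*} {P : MvPolynomial σ ℝ} {N : ℕ} (hP : P.IsHomogeneous N)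
    (e u : σ → ℝ) (T : Set (σ → ℝ)) (hT : Convex ℝ T) (heT : e ∈ T)
    (hT0 : ∀ x y : σ → ℝ, y ∈ T →
      MvPolynomial.aeval (fun i => (x i : ℂ) + Complex.I * (y i : ℂ)) P ≠ 0)
    (hu : MvPolynomial.aeval (fun i => (u i : ℂ)) P ≠ 0)
    (hue : ∀ t : ℝ, 0 < t → MvPolynomial.aeval (fun i => (t : ℂ) * (e i : ℂ) + (u i : ℂ)) P ≠ 0)
    (x y : σ → ℝ) (hy : y ∈ T) (b : ℝ) (hb : 0 ≤ b) :
    MvPolynomial.aeval (fun i => (x i : ℂ) + Complex.I * ((y i + b * u i : ℝ) : ℂ)) P ≠ 0 := by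
  set A : ℝ → σ → ℂ := fun β i =>
    ((β * x i : ℝ) : ℂ) + Complex.I * (((1 - β) * e i + β * y i : ℝ) : ℂ) with hA
  have hAT : ∀ β ∈ Set.Icc (0 : ℝ) 1, ((fun i => (1 - β) * e i + β * y i) : σ → ℝ) ∈ T := by
    intro β hβ
    have := hT heT hy (by linarith [hβ.2] : 0 ≤ 1 - β) hβ.1 (by ring)
    convert this using 1
    ext i; simp
  -- no real roots along the path
  have hreal : ∀ β ∈ Set.Icc (0 : ℝ) 1, ∀ s : ℝ,
      MvPolynomial.aeval (fun i => A β i + (s : ℂ) * (u i : ℂ)) P ≠ 0 := by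
    intro β hβ s
    have := hT0 (fun i => β * x i + s * u i) _ (hAT β hβ)
    convert this using 4 with i
    simp only [hA]; push_cast; ring
  set B : Set ℝ := {β | β ∈ Set.Icc (0 : ℝ) 1 ∧ ∃ s : ℂ, 0 ≤ s.im ∧
    MvPolynomial.aeval (fun i => A β i + s * (u i : ℂ)) P = 0} with hB
  set G : Set ℝ := {β | ∀ (s t : ℝ), 0 ≤ t →
    ‖MvPolynomial.aeval (fun i => A β i + (s : ℂ) * (u i : ℂ)) P‖ ≤
    ‖MvPolynomial.aeval (fun i => A β i + ((s : ℂ) + t * Complex.I) * (u i : ℂ)) P‖} with hG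
  have hGclosed : IsClosed G := by
    simp only [hG, Set.ofPred_forall]
    refine isClosed_iInter fun s => isClosed_iInter fun t => isClosed_iInter fun _ => ?_
    refine isClosed_le (continuous_norm.comp (continuous_aeval_comp P _ ?_))
      (continuous_norm.comp (continuous_aeval_comp P _ ?_)) <;>
    · intro i; simp only [hA]; fun_prop
  have hBclosed : IsClosed B := by
    -- homogenize `s = b / a`, so that the parameters range over a compact set
    set F : ℝ × ℝ × ℂ → ℂ := fun q =>
      MvPolynomial.aeval (fun i => (q.2.1 : ℂ) * A q.1 i + q.2.2 * (u i : ℂ)) P with hF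
    have hFc : Continuous F := by
      refine continuous_aeval_comp P _ ?_
      intro i; simp only [hA]; fun_prop
    set C : Set (ℝ × ℝ × ℂ) :=
      (Set.Icc (0 : ℝ) 1 ×ˢ (Set.Icc (0 : ℝ) 1 ×ˢ Metric.closedBall (0 : ℂ) 1)) ∩
        {q | 0 ≤ q.2.2.im ∧ q.2.1 + ‖q.2.2‖ = 1 ∧ F q = 0} with hC
    have hCc : IsCompact C := by
      refine (isCompact_Icc.prod (isCompact_Icc.prod (isCompact_closedBall _ _))).inter_right ?_
      refine (isClosed_le (by fun_prop) (Complex.continuous_im.comp (by fun_prop))).inter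
        ((isClosed_eq (by fun_prop) (by fun_prop)).inter (isClosed_eq hFc (by fun_prop)))
    have : B = Prod.fst '' C := by
      ext β
      constructor
      · rintro ⟨hβ, s, hs, h0⟩
        have hpos : 0 < 1 + ‖s‖ := by positivity
        refine ⟨(β, (1 + ‖s‖)⁻¹, ((1 + ‖s‖)⁻¹ : ℝ) * s), ⟨⟨hβ, ⟨by positivity, ?_⟩, ?_⟩,
          ?_, ?_, ?_⟩, rfl⟩
        · exact inv_le_one_of_one_le₀ (by linarith [norm_nonneg s])
        · simp only [mem_closedBall_zero_iff, norm_mul, Complex.norm_real, norm_inv,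
            Real.norm_eq_abs, abs_of_pos hpos]
          rw [inv_mul_le_iff₀ hpos]; linarith
        · simp only [Complex.im_ofReal_mul]; positivity
        · simp only [norm_mul, Complex.norm_real, norm_inv,
            Real.norm_eq_abs, abs_of_pos hpos]
          field_simp
        · have := aeval_scale hP (((1 + ‖s‖)⁻¹ : ℝ) : ℂ) (fun i => A β i + s * (u i : ℂ))
          rw [h0, mul_zero] at this
          rw [← this]
          simp only [hF]
          congr 2; ext i; ring
      · rintro ⟨⟨β', a, c⟩, ⟨⟨hβ, ha, hc⟩, him, hsum, h0⟩, rfl⟩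
        simp only at hβ ha hc him hsum h0 ⊢
        have ha0 : a ≠ 0 := by
          rintro rfl
          simp only [hF, Complex.ofReal_zero, zero_mul, zero_add] at h0
          rw [aeval_scale hP] at h0
          have hc0 : c ≠ 0 := by
            rintro rfl
            simp at hsum
          exact (mul_ne_zero (pow_ne_zero _ hc0) hu) h0
        have hapos : 0 < a := lt_of_le_of_ne ha.1 (Ne.symm ha0)
        refine ⟨hβ, ((a⁻¹ : ℝ) : ℂ) * c, ?_, ?_⟩
        · rw [Complex.im_ofReal_mul]; positivity
        · have := aeval_scale hP ((a⁻¹ : ℝ) : ℂ) (fun i => (a : ℂ) * A β' i + c * (u i : ℂ))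
          simp only [hF] at h0
          rw [h0, mul_zero] at this
          rw [← this]
          congr 2; ext i
          have : (a : ℂ) ≠ 0 := by exact_mod_cast ha0
          push_cast
          field_simp
    rw [this]
    exact (hCc.image continuous_fst).isClosed
  have hcover : Set.Icc (0 : ℝ) 1 ⊆ B ∪ G := by
    intro β hβ
    by_cases hBβ : β ∈ B
    · exact Or.inl hBβ
    right
    intro s t ht
    have hroots : ∀ r : ℂ, (linePoly (A β) u P).eval r = 0 → r.im ≤ 0 := by
      intro r hr
      by_contra hpos
      push Not at hpos
      refine hBβ ⟨hβ, r, hpos.le, ?_⟩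
      simpa [linePoly_eval] using hr
    have := norm_eval_le_of_roots (linePoly (A β) u P) (s : ℂ) (s + t * Complex.I) (by
      intro r hr
      have hr := hroots r hr
      rw [Complex.norm_def, Complex.norm_def]
      refine Real.sqrt_le_sqrt ?_
      simp only [Complex.normSq_apply, Complex.sub_re, Complex.sub_im, Complex.add_re,
        Complex.add_im, Complex.ofReal_re, Complex.ofReal_im, Complex.mul_re, Complex.mul_im,
        Complex.I_re, Complex.I_im]
      nlinarith)
    simpa [linePoly_eval] using this
  have hdisj : ∀ β ∈ B, β ∉ G := by
    rintro β ⟨hβ, s, hs, h0⟩ hGβ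
    have h1 := hGβ s.re s.im hs
    rw [Complex.re_add_im, h0, norm_zero] at h1
    exact hreal β hβ s.re (norm_le_zero_iff.1 h1)
  have h0B : (0 : ℝ) ∉ B := by
    rintro ⟨-, s, hs, h0⟩
    have hs0 : s ≠ 0 := by
      rintro rfl
      exact hreal 0 ⟨le_rfl, zero_le_one⟩ 0 (by simpa using h0)
    -- rescale the zero `i e + s u` of `P` to a root of `τ ↦ P (τ e + u)`, which must be real
    set τ : ℂ := Complex.I / s with hτ
    have h1 : MvPolynomial.aeval (fun i => τ * (e i : ℂ) + (u i : ℂ)) P = 0 := by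
      have := aeval_scale hP s⁻¹ (fun i => A 0 i + s * (u i : ℂ))
      rw [h0, mul_zero] at this
      rw [← this]
      congr 2; ext i
      simp only [hA, hτ]; push_cast
      field_simp
      ring
    have hT2 : τ.im = 0 := by
      by_contra him
      have h2 := hT0 (fun i => ((τ.re / τ.im) * e i + (1 / τ.im) * u i)) e heT
      have h3 := aeval_scale hP ((1 / τ.im : ℝ) : ℂ) (fun i => τ * (e i : ℂ) + (u i : ℂ))
      rw [h1, mul_zero] at h3
      refine h2 (Eq.trans ?_ h3)
      congr 2; ext i
      have hc : (τ.im : ℂ) ≠ 0 := by exact_mod_cast him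
      push_cast
      field_simp
      linear_combination (e i : ℂ) * Complex.re_add_im τ
    have hτre : 0 < τ.re := by
      have hn : 0 < Complex.normSq s := Complex.normSq_pos.2 hs0
      have h5 : 0 ≤ τ.re := by
        rw [hτ, Complex.div_re]; simp only [Complex.I_re, Complex.I_im]
        have : 0 ≤ s.im / Complex.normSq s := by positivity
        simpa using this
      rcases h5.lt_or_eq with h | h
      · exact h
      · exfalso
        have : τ = 0 := Complex.ext h.symm hT2
        simp [hτ, hs0] at this
    have h6 : τ = (τ.re : ℂ) := Complex.ext rfl (by simp [hT2])
    rw [h6] at h1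
    exact hue τ.re hτre h1
  have h1B : (1 : ℝ) ∉ B := by
    intro h1
    have h0G : (0 : ℝ) ∈ G := (hcover ⟨le_rfl, zero_le_one⟩).resolve_left h0B
    obtain ⟨β, -, hβB, hβG⟩ := isPreconnected_closed_iff.1 (isPreconnected_Icc (a := (0:ℝ)) (b := 1))
      B G hBclosed hGclosed hcover ⟨1, ⟨zero_le_one, le_rfl⟩, h1⟩ ⟨0, ⟨le_rfl, zero_le_one⟩, h0G⟩
    exact hdisj β hβB hβG
  intro h0
  refine h1B ⟨⟨zero_le_one, le_rfl⟩, (b : ℂ) * Complex.I, by simpa using hb, ?_⟩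
  rw [← h0]
  congr 2; ext i
  simp only [hA]; push_cast; ring

/-! ### Monotonicity and the Rayleigh inequality -/

/-- `P` has no zero whose imaginary part is nonnegative everywhere and positive on `F`.
For `F = univ` this is stability; smaller `F` give stronger conditions. -/
def TubeStable {σ : Type*} (P : MvPolynomial σ ℝ) (F : Set σ) : Prop :=
  ∀ z : σ → ℂ, (∀ i, 0 ≤ (z i).im) → (∀ i ∈ F, 0 < (z i).im) → MvPolynomial.aeval z P ≠ 0

/-- The real points that are nonnegative everywhere and positive on `F`. -/
def posOn {σ : Type*} (F : Set σ) : Set (σ → ℝ) :=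
  {z | (∀ i, 0 ≤ z i) ∧ ∀ i ∈ F, 0 < z i}

theorem posOn_add {σ : Type*} {F : Set σ} {z u : σ → ℝ} (hz : z ∈ posOn F) (hu : ∀ i, 0 ≤ u i) :
    (fun i => z i + u i) ∈ posOn F :=
  ⟨fun i => add_nonneg (hz.1 i) (hu i), fun i hi => add_pos_of_pos_of_nonneg (hz.2 i hi) (hu i)⟩

/-- A homogeneous tube-stable polynomial does not vanish at `z + x u + y v` as soon as some
rotation by `ω` brings all three directions `1, x, y` to the upper half-plane. -/
theorem TubeStable.rot {σ : Type*} {P : MvPolynomial σ ℝ} {F : Set σ} (hS : TubeStable P F)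
    {N : ℕ} (hP : P.IsHomogeneous N) {z u v : σ → ℝ} (hz : z ∈ posOn F) (hu : ∀ i, 0 ≤ u i)
    (hv : ∀ i, 0 ≤ v i) (x y ω : ℂ) (hω : 0 < ω.im) (hx : 0 ≤ (ω * x).im) (hy : 0 ≤ (ω * y).im) :
    MvPolynomial.aeval (fun i => (z i : ℂ) + x * (u i : ℂ) + y * (v i : ℂ)) P ≠ 0 := by
  intro h
  have h1 := aeval_scale hP ω (fun i => (z i : ℂ) + x * (u i : ℂ) + y * (v i : ℂ))
  rw [h, mul_zero] at h1
  have him : ∀ i, (ω * ((z i : ℂ) + x * (u i : ℂ) + y * (v i : ℂ))).im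
      = ω.im * z i + (ω * x).im * u i + (ω * y).im * v i := by
    intro i
    simp only [Complex.mul_im, Complex.add_im, Complex.add_re, Complex.mul_re, Complex.ofReal_re,
      Complex.ofReal_im]
    ring
  refine hS _ (fun i => ?_) (fun i hi => ?_) h1
  · rw [him]
    have := hz.1 i; have := hu i; have := hv i
    positivity
  · rw [him]
    have := hz.2 i hi; have := hu i; have := hv i
    positivity

theorem exists_small (a b : ℝ) (ha : 0 < a) :
    ∃ δ : ℝ, 0 < δ ∧ ∀ ε : ℝ, 0 < ε → ε ≤ δ → 0 ≤ a + ε * b := by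
  refine ⟨a / (1 + |b|), by positivity, fun ε h0 h1 => ?_⟩
  rw [le_div_iff₀ (by positivity)] at h1
  nlinarith [neg_abs_le b, abs_nonneg b]

theorem TubeStable.aeval_ne_zero {σ : Type*} {P : MvPolynomial σ ℝ} {F : Set σ}
    (hS : TubeStable P F) {N : ℕ} (hP : P.IsHomogeneous N) {z : σ → ℝ} (hz : z ∈ posOn F) :
    MvPolynomial.aeval z P ≠ 0 := by
  intro h
  have h1 := hS.rot hP hz (u := 0) (v := 0) (by simp) (by simp) 0 0 Complex.I (by simp) (by simp)
    (by simp)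
  have h2 := aeval_ofReal P z
  rw [h] at h2
  exact h1 (by simpa using h2)

/-- On the cone, `|P|` is monotone: all roots of `s ↦ P (z + s u)` are real and negative. -/
theorem TubeStable.mono {σ : Type*} {P : MvPolynomial σ ℝ} {F : Set σ} (hS : TubeStable P F)
    {N : ℕ} (hP : P.IsHomogeneous N) {z u : σ → ℝ} (hz : z ∈ posOn F) (hu : ∀ i, 0 ≤ u i) :
    |MvPolynomial.aeval z P| ≤ |MvPolynomial.aeval (fun i => z i + u i) P| := by
  have hroot : ∀ r : ℂ, (linePoly (fun i => (z i : ℂ)) u P).eval r = 0 → r.im = 0 ∧ r.re < 0 := by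
    intro r hr
    have hr' : MvPolynomial.aeval
        (fun i => (z i : ℂ) + r * (u i : ℂ) + 0 * ((0 : σ → ℝ) i : ℂ)) P = 0 := by
      simpa [linePoly_eval] using hr
    have key := fun ω h1 h2 => hS.rot hP hz hu (v := 0) (by simp) r 0 ω h1 h2 (by simp) hr'
    have him : r.im = 0 := by
      rcases lt_trichotomy r.im 0 with h | h | h
      · exfalso
        obtain ⟨δ, hδ, h2⟩ := exists_small (-r.im) r.re (by linarith)
        refine key (-1 + δ * Complex.I) (by simpa using hδ) ?_
        have := h2 δ hδ le_rfl
        simp only [Complex.mul_im, Complex.add_re, Complex.add_im, Complex.neg_re, Complex.neg_im,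
          Complex.one_re, Complex.one_im, Complex.mul_re, Complex.ofReal_re, Complex.ofReal_im,
          Complex.I_re, Complex.I_im]
        linarith
      · exact h
      · exfalso
        obtain ⟨δ, hδ, h2⟩ := exists_small r.im r.re h
        refine key (1 + δ * Complex.I) (by simpa using hδ) ?_
        have := h2 δ hδ le_rfl
        simp only [Complex.mul_im, Complex.add_re, Complex.add_im,
          Complex.one_re, Complex.one_im, Complex.mul_re, Complex.ofReal_re, Complex.ofReal_im,
          Complex.I_re, Complex.I_im]
        linarith
    refine ⟨him, ?_⟩
    by_contra hre
    push Not at hre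
    exact key Complex.I (by simp) (by simpa using hre)
  have := norm_eval_le_of_roots (linePoly (fun i => (z i : ℂ)) u P) 0 1 (by
    intro r hr
    obtain ⟨h1, h2⟩ := hroot r hr
    rw [Complex.norm_def, Complex.norm_def]
    refine Real.sqrt_le_sqrt ?_
    simp only [Complex.normSq_apply, Complex.sub_re, Complex.sub_im, Complex.zero_re,
      Complex.zero_im, Complex.one_re, Complex.one_im, h1]
    nlinarith)
  have h1 := aeval_ofReal P z
  have h2 := aeval_ofReal P (fun i => z i + u i)
  simp only [linePoly_eval, zero_mul, add_zero, one_mul] at this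
  rw [h1] at this
  have h3 : (fun i => (z i : ℂ) + (algebraMap ℝ ℂ) (u i)) = fun i => ((z i + u i : ℝ) : ℂ) := by
    ext i; simp
  rw [h3, h2, Complex.norm_real, Complex.norm_real] at this
  exact this

theorem linePoly_eval_real {σ : Type*} (w v : σ → ℝ) (P : MvPolynomial σ ℝ) (t : ℝ) :
    (linePoly w v P).eval t = MvPolynomial.aeval (fun i => w i + t * v i) P := by
  simp [linePoly_eval]

theorem linePoly_aeval_complex {σ : Type*} (w v : σ → ℝ) (P : MvPolynomial σ ℝ) (t : ℂ) :
    Polynomial.aeval t (linePoly w v P)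
      = MvPolynomial.aeval (fun i => (w i : ℂ) + t * (v i : ℂ)) P := by
  induction P using MvPolynomial.induction_on with
  | C a => simp [linePoly]
  | add p q hp hq => simp [hp, hq]
  | mul_X p i hp => simp only [map_mul, hp]; simp [linePoly, mul_comm t]

/-- The Rayleigh inequality `∂_u ∂_v log |P| ≤ 0` on the cone. The rational function
`x ↦ (∂_v P / P) (z + x u)` maps the upper half-plane to the closed lower half-plane and is real on
the real line, so its derivative at `0` is nonpositive. -/
theorem TubeStable.rayleigh {σ : Type*} {P : MvPolynomial σ ℝ} {F : Set σ} (hS : TubeStable P F)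
    {N : ℕ} (hP : P.IsHomogeneous N) {z u v : σ → ℝ} (hz : z ∈ posOn F) (hu : ∀ i, 0 ≤ u i)
    (hv : ∀ i, 0 ≤ v i) :
    (linePoly z u (dirDeriv v P)).derivative.eval 0 * (linePoly z u P).eval 0
      - (linePoly z u (dirDeriv v P)).eval 0 * (linePoly z u P).derivative.eval 0 ≤ 0 := by
  set a := linePoly z u P with ha
  set b := linePoly z u (dirDeriv v P) with hb
  have hquot : ∀ x : ℂ, 0 < x.im → (Polynomial.aeval x b / Polynomial.aeval x a).im ≤ 0 := by
    intro x hx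
    set p := linePoly (fun i => (z i : ℂ) + x * (u i : ℂ)) v P with hp
    have e1 : Polynomial.aeval x a = p.eval 0 := by
      rw [ha, hp, linePoly_aeval_complex, linePoly_eval]; simp
    have e2 : Polynomial.aeval x b = p.derivative.eval 0 := by
      rw [hb, hp, linePoly_derivative, linePoly_aeval_complex, linePoly_eval]; simp
    obtain ⟨δ₁, hδ₁, h1⟩ := exists_small x.im x.re hx
    have hωim : ∀ (δ : ℝ) (x : ℂ), ((1 + δ * Complex.I) * x).im = x.im + δ * x.re := by
      intro δ x
      simp
    rw [e1, e2]
    refine im_logDeriv_nonpos p ?_ ?_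
    · rw [hp, linePoly_eval]
      exact hS.rot hP hz hu hv x 0 (1 + δ₁ * Complex.I) (by simpa using hδ₁)
        (by rw [hωim]; exact h1 _ hδ₁ le_rfl) (by simp)
    · intro r hr
      by_contra hpos
      push Not at hpos
      obtain ⟨δ₂, hδ₂, h2⟩ := exists_small r.im r.re hpos
      have hδ : 0 < min δ₁ δ₂ := lt_min hδ₁ hδ₂
      rw [hp, linePoly_eval] at hr
      refine hS.rot hP hz hu hv x r (1 + (min δ₁ δ₂ : ℝ) * Complex.I) ?_ ?_ ?_ hr
      · simpa using hδ
      · rw [hωim]; exact h1 _ hδ (min_le_left _ _)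
      · rw [hωim]; exact h2 _ hδ (min_le_right _ _)
  -- `g ε = b(iε) * conj (a(iε))`, whose imaginary part has the sign of that of `b / a` at `iε`
  set g : ℝ → ℂ := fun ε =>
    Polynomial.aeval (ε * Complex.I) b * Polynomial.aeval (-(ε * Complex.I)) a with hg
  have hconj : ∀ x : ℂ, Polynomial.aeval (starRingEnd ℂ x) a
      = starRingEnd ℂ (Polynomial.aeval x a) := by
    intro x
    exact Polynomial.aeval_algHom_apply Complex.conjAe.toAlgHom x a
  have hψ : ∀ ε : ℝ, 0 < ε → (g ε).im ≤ 0 := by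
    intro ε hε
    have h1 := hquot (ε * Complex.I) (by simpa using hε)
    have h2 : -(ε * Complex.I) = starRingEnd ℂ (ε * Complex.I) := by simp
    simp only [hg]
    rw [h2, hconj]
    set A := Polynomial.aeval ((ε : ℂ) * Complex.I) a
    set B := Polynomial.aeval ((ε : ℂ) * Complex.I) b
    rcases eq_or_ne A 0 with h0 | h0
    · simp [h0]
    have h3 : B * starRingEnd ℂ A = (B / A) * ((Complex.normSq A : ℝ) : ℂ) := by
      rw [← Complex.mul_conj]; field_simp
    rw [h3, Complex.im_mul_ofReal]
    exact mul_nonpos_of_nonpos_of_nonneg h1 (Complex.normSq_nonneg _)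
  have hcast : ∀ q : Polynomial ℝ, Polynomial.aeval (0 : ℂ) q = ((q.eval 0 : ℝ) : ℂ) := by
    intro q
    have := Polynomial.aeval_algebraMap_apply ℂ (0 : ℝ) q
    simpa using this
  have hder : HasDerivAt g (Complex.I * ((b.derivative.eval 0 * a.eval 0
      - b.eval 0 * a.derivative.eval 0 : ℝ) : ℂ)) 0 := by
    have l1 : HasDerivAt (fun ε : ℝ => (ε : ℂ) * Complex.I) Complex.I 0 := by
      simpa using (Complex.ofRealCLM.hasDerivAt (x := (0 : ℝ))).mul_const Complex.I
    have l2 : HasDerivAt (fun ε : ℝ => -((ε : ℂ) * Complex.I)) (-Complex.I) 0 := l1.neg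
    have d1 := (b.hasDerivAt_aeval ((((0 : ℝ) : ℂ)) * Complex.I)).comp (0 : ℝ) l1
    have d2 := (a.hasDerivAt_aeval (-((((0 : ℝ) : ℂ)) * Complex.I))).comp (0 : ℝ) l2
    refine (d1.mul d2).congr_deriv ?_
    simp only [Function.comp, Complex.ofReal_zero, zero_mul, neg_zero, hcast]
    push_cast
    ring
  have hder' : HasDerivAt (fun ε => (g ε).im) (b.derivative.eval 0 * a.eval 0
      - b.eval 0 * a.derivative.eval 0) 0 := by
    have := (Complex.imCLM.hasFDerivAt.comp_hasDerivAt (0 : ℝ) hder)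
    simpa [Function.comp_def] using this
  have hg0 : (g 0).im = 0 := by
    simp [hg, hcast]
  have ht := (hasDerivAt_iff_tendsto_slope.1 hder').mono_left
    (nhdsWithin_mono (0 : ℝ) (fun x (hx : x ∈ Set.Ioi (0 : ℝ)) => (ne_of_gt hx)))
  refine le_of_tendsto ht ?_
  filter_upwards [self_mem_nhdsWithin] with ε hε
  rw [slope_def_field, hg0]
  exact div_nonpos_of_nonpos_of_nonneg (by simpa using hψ ε hε)
    (by simpa using (le_of_lt hε : (0 : ℝ) ≤ ε))

/-! ### Degrees along directions -/

/-- The logarithmic derivative in direction `v` decreases along `u`. -/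
theorem TubeStable.logDeriv_anti {σ : Type*} {P : MvPolynomial σ ℝ} {F : Set σ}
    (hS : TubeStable P F) {N : ℕ} (hP : P.IsHomogeneous N) {z u v : σ → ℝ} (hz : z ∈ posOn F)
    (hu : ∀ i, 0 ≤ u i) (hv : ∀ i, 0 ≤ v i) :
    MvPolynomial.aeval (fun i => z i + u i) (dirDeriv v P)
        / MvPolynomial.aeval (fun i => z i + u i) P
      ≤ MvPolynomial.aeval z (dirDeriv v P) / MvPolynomial.aeval z P := by
  set a := linePoly z u P with ha
  set b := linePoly z u (dirDeriv v P) with hb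
  have hzt : ∀ t : ℝ, 0 ≤ t → (fun i => z i + t * u i) ∈ posOn F := fun t ht =>
    posOn_add hz fun i => mul_nonneg ht (hu i)
  have ha0 : ∀ t : ℝ, 0 ≤ t → a.eval t ≠ 0 := by
    intro t ht
    rw [ha, linePoly_eval_real]
    exact hS.aeval_ne_zero hP (hzt t ht)
  have hd : ∀ t : ℝ, 0 ≤ t → HasDerivAt (fun t => b.eval t / a.eval t)
      ((b.derivative.eval t * a.eval t - b.eval t * a.derivative.eval t) / a.eval t ^ 2) t :=
    fun t ht => (b.hasDerivAt t).div (a.hasDerivAt t) (ha0 t ht)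
  have hle : ∀ t : ℝ, 0 ≤ t →
      b.derivative.eval t * a.eval t - b.eval t * a.derivative.eval t ≤ 0 := by
    intro t ht
    have := hS.rayleigh hP (hzt t ht) hu hv
    simpa only [ha, hb, linePoly_derivative, linePoly_eval_real, zero_mul, add_zero] using this
  have hanti : AntitoneOn (fun t => b.eval t / a.eval t) (Set.Icc (0 : ℝ) 1) := by
    refine antitoneOn_of_deriv_nonpos (convex_Icc 0 1)
      (fun t ht => (hd t ht.1).continuousAt.continuousWithinAt) ?_ ?_
    · intro t ht
      rw [interior_Icc] at ht
      exact (hd t ht.1.le).differentiableAt.differentiableWithinAt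
    · intro t ht
      rw [interior_Icc] at ht
      rw [(hd t ht.1.le).deriv]
      exact div_nonpos_of_nonpos_of_nonneg (hle t ht.1.le) (sq_nonneg _)
  have := hanti (Set.left_mem_Icc.2 zero_le_one) (Set.right_mem_Icc.2 zero_le_one) zero_le_one
  simpa only [ha, hb, linePoly_eval_real, zero_mul, add_zero, one_mul] using this

/-- Integrated Rayleigh inequality: `|P|` is log-submodular along directions of the cone. -/
theorem TubeStable.submod {σ : Type*} {P : MvPolynomial σ ℝ} {F : Set σ}
    (hS : TubeStable P F) {N : ℕ} (hP : P.IsHomogeneous N) {z u v : σ → ℝ} (hz : z ∈ posOn F)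
    (hu : ∀ i, 0 ≤ u i) (hv : ∀ i, 0 ≤ v i) :
    |MvPolynomial.aeval (fun i => z i + u i + v i) P| * |MvPolynomial.aeval z P| ≤
      |MvPolynomial.aeval (fun i => z i + u i) P| * |MvPolynomial.aeval (fun i => z i + v i) P| := by
  set a := linePoly z v P with ha
  set b := linePoly (fun i => z i + u i) v P with hb
  have hz' : (fun i => z i + u i) ∈ posOn F := posOn_add hz hu
  have hzt : ∀ {z : σ → ℝ}, z ∈ posOn F → ∀ t : ℝ, 0 ≤ t → (fun i => z i + t * v i) ∈ posOn F :=
    fun hz t ht => posOn_add hz fun i => mul_nonneg ht (hv i)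
  have ha0 : ∀ t : ℝ, 0 ≤ t → a.eval t ≠ 0 := by
    intro t ht
    rw [ha, linePoly_eval_real]
    exact hS.aeval_ne_zero hP (hzt hz t ht)
  have hb0 : ∀ t : ℝ, 0 ≤ t → b.eval t ≠ 0 := by
    intro t ht
    rw [hb, linePoly_eval_real]
    exact hS.aeval_ne_zero hP (hzt hz' t ht)
  have hd : ∀ t : ℝ, 0 ≤ t → HasDerivAt (fun t => Real.log (b.eval t) - Real.log (a.eval t))
      (b.derivative.eval t / b.eval t - a.derivative.eval t / a.eval t) t :=
    fun t ht => ((b.hasDerivAt t).log (hb0 t ht)).sub ((a.hasDerivAt t).log (ha0 t ht))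
  have hanti : AntitoneOn (fun t => Real.log (b.eval t) - Real.log (a.eval t))
      (Set.Icc (0 : ℝ) 1) := by
    refine antitoneOn_of_deriv_nonpos (convex_Icc 0 1)
      (fun t ht => (hd t ht.1).continuousAt.continuousWithinAt) ?_ ?_
    · intro t ht
      rw [interior_Icc] at ht
      exact (hd t ht.1.le).differentiableAt.differentiableWithinAt
    · intro t ht
      rw [interior_Icc] at ht
      rw [(hd t ht.1.le).deriv]
      have := hS.logDeriv_anti hP (hzt hz t ht.1.le) hu hv
      simp only [add_right_comm _ _ (u _)] at this
      simp only [ha, hb, linePoly_derivative, linePoly_eval_real]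
      linarith
  have := hanti (Set.left_mem_Icc.2 zero_le_one) (Set.right_mem_Icc.2 zero_le_one) zero_le_one
  simp only at this
  have p1 := abs_pos.2 (ha0 0 le_rfl)
  have p2 := abs_pos.2 (ha0 1 zero_le_one)
  have p3 := abs_pos.2 (hb0 0 le_rfl)
  have p4 := abs_pos.2 (hb0 1 zero_le_one)
  rw [← Real.log_abs (b.eval 1), ← Real.log_abs (a.eval 1), ← Real.log_abs (b.eval 0),
    ← Real.log_abs (a.eval 0)] at this
  have h2 : Real.log (|b.eval 1| * |a.eval 0|) ≤ Real.log (|b.eval 0| * |a.eval 1|) := by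
    rw [Real.log_mul p4.ne' p1.ne', Real.log_mul p3.ne' p2.ne']
    linarith
  have h3 := (Real.log_le_log_iff (mul_pos p4 p1) (mul_pos p3 p2)).1 h2
  simpa only [ha, hb, linePoly_eval_real, zero_mul, add_zero, one_mul] using h3

/-- The rank of a direction `w` seen from the base point `z`: the degree of `t ↦ P (z + t w)`. -/
noncomputable def dirRank {σ : Type*} (P : MvPolynomial σ ℝ) (z w : σ → ℝ) : ℕ :=
  (linePoly z w P).natDegree

theorem TubeStable.line_ne_zero {σ : Type*} {P : MvPolynomial σ ℝ} {F : Set σ}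
    (hS : TubeStable P F) {N : ℕ} (hP : P.IsHomogeneous N) {z w : σ → ℝ} (hz : z ∈ posOn F) :
    linePoly z w P ≠ 0 := by
  intro h
  have h1 := linePoly_eval_real z w P 0
  rw [h] at h1
  simp only [Polynomial.eval_zero, zero_mul, add_zero] at h1
  exact hS.aeval_ne_zero hP hz h1.symm

/-- The rank is monotone in the direction, up to scaling. -/
theorem TubeStable.dirRank_le {σ : Type*} {P : MvPolynomial σ ℝ} {F : Set σ}
    (hS : TubeStable P F) {N : ℕ} (hP : P.IsHomogeneous N) {z w w' : σ → ℝ} (hz : z ∈ posOn F)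
    (hw : ∀ i, 0 ≤ w i) (M : ℝ) (hM : 1 ≤ M) (hww' : ∀ i, w i ≤ M * w' i) :
    dirRank P z w ≤ dirRank P z w' := by
  refine natDegree_le_of_abs_eval_le (hS.line_ne_zero hP hz) (M ^ N) fun t ht => ?_
  rw [linePoly_eval_real, linePoly_eval_real]
  have h1 := hS.mono hP (posOn_add hz fun i => mul_nonneg ht (hw i))
    (u := fun i => (M - 1) * z i + t * (M * w' i - w i)) (fun i => by
      have := hz.1 i; have := hww' i
      have h1 : 0 ≤ M - 1 := by linarith
      have h2 : 0 ≤ M * w' i - w i := by linarith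
      positivity)
  have h2 := aeval_scale hP M (fun i => z i + t * w' i)
  have h3 : (fun i => z i + t * w i + ((M - 1) * z i + t * (M * w' i - w i)))
      = fun i => M * (z i + t * w' i) := by ext i; ring
  rw [h3, h2, abs_mul, abs_of_nonneg (by positivity : 0 ≤ M ^ N)] at h1
  exact h1

/-- The rank does not change when the base point moves inside the cone: by monotonicity and
log-submodularity of `|P|` the two univariate polynomials bound each other up to a constant. -/
theorem TubeStable.dirRank_base {σ : Type*} {P : MvPolynomial σ ℝ} {F : Set σ}
    (hS : TubeStable P F) {N : ℕ} (hP : P.IsHomogeneous N) {z u w : σ → ℝ} (hz : z ∈ posOn F)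
    (hu : ∀ i, 0 ≤ u i) (hw : ∀ i, 0 ≤ w i) :
    dirRank P (fun i => z i + u i) w = dirRank P z w := by
  have hz0 := abs_pos.2 (hS.aeval_ne_zero hP hz)
  refine le_antisymm (natDegree_le_of_abs_eval_le (hS.line_ne_zero hP hz)
    (|MvPolynomial.aeval (fun i => z i + u i) P| / |MvPolynomial.aeval z P|) fun t ht => ?_)
    (natDegree_le_of_abs_eval_le (hS.line_ne_zero hP (posOn_add hz hu)) 1 fun t ht => ?_)
  · rw [linePoly_eval_real, linePoly_eval_real, div_mul_eq_mul_div, le_div_iff₀ hz0]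
    exact hS.submod hP hz hu fun i => mul_nonneg ht (hw i)
  · rw [linePoly_eval_real, linePoly_eval_real, one_mul]
    have := hS.mono hP (posOn_add hz fun i => mul_nonneg ht (hw i)) hu
    simpa only [add_right_comm _ _ (u _)] using this

theorem TubeStable.dirRank_submod {σ : Type*} {P : MvPolynomial σ ℝ} {F : Set σ}
    (hS : TubeStable P F) {N : ℕ} (hP : P.IsHomogeneous N) {z u v w : σ → ℝ} (hz : z ∈ posOn F)
    (hu : ∀ i, 0 ≤ u i) (hv : ∀ i, 0 ≤ v i) (hw : ∀ i, 0 ≤ w i) :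
    dirRank P z (fun i => w i + u i + v i) + dirRank P z w
      ≤ dirRank P z (fun i => w i + u i) + dirRank P z (fun i => w i + v i) := by
  have hne := fun w => hS.line_ne_zero hP hz (w := w)
  unfold dirRank
  rw [← Polynomial.natDegree_mul (hne _) (hne _), ← Polynomial.natDegree_mul (hne _) (hne _)]
  refine natDegree_le_of_abs_eval_le (mul_ne_zero (hne _) (hne _)) 1 fun t ht => ?_
  simp only [Polynomial.eval_mul, linePoly_eval_real, one_mul, abs_mul]
  have := hS.submod hP (posOn_add hz fun i => mul_nonneg ht (hw i)) (fun i => mul_nonneg ht (hu i))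
    (fun i => mul_nonneg ht (hv i))
  simpa only [mul_add, add_assoc] using this

/-! ### Support ranks as degrees -/

/-- Real indicator vector of a finite set. -/
def indVec {σ : Type*} [DecidableEq σ] (S : Finset σ) : σ → ℝ := fun i => if i ∈ S then 1 else 0

theorem indVec_nonneg {σ : Type*} [DecidableEq σ] (S : Finset σ) (i : σ) : 0 ≤ indVec S i := by
  unfold indVec; split_ifs <;> norm_num

theorem indVec_mem_posOn {σ : Type*} [DecidableEq σ] (S : Finset σ) :
    indVec S ∈ posOn (S : Set σ) :=
  ⟨indVec_nonneg S, fun i hi => by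
    rw [Finset.mem_coe] at hi
    simp [indVec, hi]⟩

/-- For a suitable positive point `x`, the degree of `P` along the part of `x` supported on `S` is
the largest `S`-degree of a monomial of `P`. The point `x` avoids the zeros of the part of `P` of
top `S`-degree. -/
theorem exists_dirRank_eq_polyRank {σ : Type*} [DecidableEq σ] {P : MvPolynomial σ ℝ} (hP : P ≠ 0)
    (S : Finset σ) : ∃ x : σ → ℝ, (∀ i, 0 < x i) ∧
      dirRank P x (fun i => if i ∈ S then x i else 0) = polyRank (suppSet P) S := by
  set wt : (σ →₀ ℕ) → ℕ := fun m => ∑ i ∈ S, m i with hwt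
  have himg : (fun α : σ → ℕ => ∑ i ∈ S, α i) '' suppSet P = wt '' (P.support : Set (σ →₀ ℕ)) := by
    simp [suppSet, Set.image_image, hwt]
  set r := polyRank (suppSet P) S with hr
  have hr' : r = sSup (wt '' (P.support : Set (σ →₀ ℕ))) := by
    rw [hr, polyRank, himg]
  have hbdd : BddAbove (wt '' (P.support : Set (σ →₀ ℕ))) :=
    (P.support.finite_toSet.image wt).bddAbove
  have hle : ∀ m ∈ P.support, wt m ≤ r := by
    intro m hm
    rw [hr']
    exact le_csSup hbdd ⟨m, hm, rfl⟩
  obtain ⟨m₀, hm₀, hm₀r⟩ : ∃ m ∈ P.support, wt m = r := by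
    have hne : (wt '' (P.support : Set (σ →₀ ℕ))).Nonempty := by
      obtain ⟨m, hm⟩ := MvPolynomial.support_nonempty.2 hP
      exact ⟨_, m, hm, rfl⟩
    have := Nat.sSup_mem hne hbdd
    rw [← hr'] at this
    obtain ⟨m, hm, h⟩ := this
    exact ⟨m, hm, h⟩
  set L : MvPolynomial σ ℝ :=
    ∑ m ∈ P.support with wt m = r, MvPolynomial.monomial m (P.coeff m) with hL
  have hL0 : L ≠ 0 := by
    intro h
    have h1 : L.coeff m₀ = P.coeff m₀ := by
      rw [hL, MvPolynomial.coeff_sum]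
      simp only [MvPolynomial.coeff_monomial]
      rw [Finset.sum_ite_eq' _ m₀]
      simp only [Finset.mem_filter, hm₀, hm₀r, and_self, if_true]
    rw [h, MvPolynomial.coeff_zero] at h1
    exact (MvPolynomial.mem_support_iff.1 hm₀) h1.symm
  obtain ⟨x, hx, hxL⟩ : ∃ x : σ → ℝ, (∀ i, 0 < x i) ∧ MvPolynomial.eval x L ≠ 0 := by
    by_contra hcon
    push Not at hcon
    refine hL0 (MvPolynomial.funext_set (fun _ => Set.Ioi (0 : ℝ))
      (fun _ => Set.Ioi_infinite 0) fun x hx => ?_)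
    rw [hcon x fun i => hx i (Set.mem_univ i), map_zero]
  refine ⟨x, hx, ?_⟩
  set q : Polynomial ℝ := ∑ m ∈ P.support,
    Polynomial.C (P.coeff m * ∏ i ∈ m.support, x i ^ m i) * Polynomial.X ^ wt m with hq
  have hqline : linePoly x (fun i => if i ∈ S then x i else 0) P
      = q.comp (Polynomial.X + Polynomial.C 1) := by
    rw [linePoly, MvPolynomial.aeval_def, MvPolynomial.eval₂_eq, hq, Polynomial.sum_comp]
    refine Finset.sum_congr rfl fun m _ => ?_
    simp only [Polynomial.mul_comp, Polynomial.C_comp, Polynomial.pow_comp, Polynomial.X_comp]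
    have h1 : ∀ i, (Polynomial.C (x i) + Polynomial.C (algebraMap ℝ ℝ (if i ∈ S then x i else 0))
        * Polynomial.X) ^ m i = Polynomial.C (x i ^ m i) *
          (Polynomial.X + Polynomial.C 1) ^ (if i ∈ S then m i else 0) := by
      intro i
      split_ifs
      · rw [Polynomial.C_pow, ← mul_pow]; congr 1; simp; ring
      · simp
    rw [Finset.prod_congr rfl fun i _ => h1 i, Finset.prod_mul_distrib,
      Finset.prod_pow_eq_pow_sum]
    have h2 : (∑ i ∈ m.support, if i ∈ S then m i else 0) = wt m := by
      rw [Finset.sum_ite_mem, hwt]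
      refine Finset.sum_subset Finset.inter_subset_right fun i hi hi' => ?_
      by_contra h
      exact hi' (Finset.mem_inter.2 ⟨Finsupp.mem_support_iff.2 h, hi⟩)
    rw [h2, Polynomial.C_mul, map_prod, ← mul_assoc]
    simp [Polynomial.algebraMap_eq]
  have hqr : q.coeff r = MvPolynomial.eval x L := by
    rw [hq, hL, Polynomial.finsetSum_coeff, map_sum, Finset.sum_filter]
    refine Finset.sum_congr rfl fun m _ => ?_
    rw [Polynomial.coeff_C_mul_X_pow, MvPolynomial.eval_monomial]
    simp only [eq_comm (a := r)]
    rfl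
  have hqd : q.natDegree = r := by
    refine le_antisymm ?_ (Polynomial.le_natDegree_of_ne_zero (by rw [hqr]; exact hxL))
    rw [hq]
    refine Polynomial.natDegree_sum_le_of_forall_le _ _ fun m hm => ?_
    exact (Polynomial.natDegree_C_mul_X_pow_le _ _).trans (hle m hm)
  rw [dirRank, hqline, Polynomial.natDegree_comp, hqd, Polynomial.natDegree_X_add_C, mul_one]

/-- For a tube-stable homogeneous polynomial the degree along `1_S` is the support rank of `S`. -/
theorem TubeStable.dirRank_indVec {σ : Type*} [DecidableEq σ] {P : MvPolynomial σ ℝ}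
    {E₀ : Finset σ} (hS : TubeStable P (E₀ : Set σ)) {N : ℕ} (hP : P.IsHomogeneous N)
    (hP0 : P ≠ 0) (S : Finset σ) :
    dirRank P (indVec E₀) (indVec S) = polyRank (suppSet P) S := by
  obtain ⟨x, hx, hxr⟩ := exists_dirRank_eq_polyRank hP0 S
  rw [← hxr]
  have he := indVec_mem_posOn E₀
  have hxp : x ∈ posOn (E₀ : Set σ) := ⟨fun i => (hx i).le, fun i _ => hx i⟩
  have hxS : ∀ i, 0 ≤ (if i ∈ S then x i else 0) := fun i => by
    split_ifs
    · exact (hx i).le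
    · exact le_rfl
  rw [← hS.dirRank_base hP he (fun i => (hx i).le) (indVec_nonneg S),
    ← hS.dirRank_base hP hxp (indVec_nonneg E₀) hxS]
  have hcomm : (fun i => x i + indVec E₀ i) = fun i => indVec E₀ i + x i := by
    ext i; ring
  rw [hcomm]
  have hz := posOn_add he fun i => (hx i).le
  have hsumx : ∀ i ∈ S, x i ≤ ∑ j ∈ S, x j := fun i hi =>
    Finset.single_le_sum (fun j _ => (hx j).le) hi
  have hsumi : ∀ i ∈ S, (x i)⁻¹ ≤ ∑ j ∈ S, (x j)⁻¹ := fun i hi =>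
    Finset.single_le_sum (f := fun j => (x j)⁻¹) (fun j _ => (inv_pos.2 (hx j)).le) hi
  refine le_antisymm
    (hS.dirRank_le hP hz (indVec_nonneg S) (1 + ∑ j ∈ S, (x j)⁻¹) ?_ fun i => ?_)
    (hS.dirRank_le hP hz hxS (1 + ∑ j ∈ S, x j) ?_ fun i => ?_)
  · linarith [Finset.sum_nonneg fun j (_ : j ∈ S) => (inv_pos.2 (hx j)).le]
  · unfold indVec
    split_ifs with hi
    · have h1 := hsumi i hi
      calc (1 : ℝ) = (x i)⁻¹ * x i := (inv_mul_cancel₀ (hx i).ne').symm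
        _ ≤ _ := mul_le_mul_of_nonneg_right (by linarith) (hx i).le
    · simp
  · linarith [Finset.sum_nonneg fun j (_ : j ∈ S) => (hx j).le]
  · unfold indVec
    split_ifs with hi
    · linarith [hsumx i hi]
    · simp

/-- The degrees of a tube-stable polynomial along indicator vectors form a polymatroid. -/
theorem TubeStable.dirRank_polymatroid {σ : Type*} [DecidableEq σ] {P : MvPolynomial σ ℝ}
    {E₀ : Finset σ} (hS : TubeStable P (E₀ : Set σ)) {N : ℕ} (hP : P.IsHomogeneous N) :
    dirRank P (indVec E₀) (indVec ∅) = 0 ∧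
    (∀ S T, S ⊆ T → dirRank P (indVec E₀) (indVec S) ≤ dirRank P (indVec E₀) (indVec T)) ∧
    ∀ S T, dirRank P (indVec E₀) (indVec (S ∪ T)) + dirRank P (indVec E₀) (indVec (S ∩ T))
      ≤ dirRank P (indVec E₀) (indVec S) + dirRank P (indVec E₀) (indVec T) := by
  have he := indVec_mem_posOn E₀
  refine ⟨?_, fun S T hST => ?_, fun S T => ?_⟩
  · have : linePoly (indVec E₀) (indVec ∅) P
        = Polynomial.C (MvPolynomial.aeval (indVec E₀) P) := by
      refine Polynomial.funext fun t => ?_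
      have hfun : (fun i => indVec E₀ i + t * indVec ∅ i) = indVec E₀ := by
        ext i
        simp [indVec]
      rw [linePoly_eval_real, Polynomial.eval_C, hfun]
    rw [dirRank, this, Polynomial.natDegree_C]
  · refine hS.dirRank_le hP he (indVec_nonneg S) 1 le_rfl fun i => ?_
    by_cases h : i ∈ S
    · simp [indVec, h, hST h]
    · simpa [indVec, h] using indVec_nonneg T i
  · have h := hS.dirRank_submod hP he (indVec_nonneg (S \ T)) (indVec_nonneg (T \ S))
      (indVec_nonneg (S ∩ T))
    convert h using 3
    all_goals
      ext i
      by_cases h1 : i ∈ S <;> by_cases h2 : i ∈ T <;> simp [indVec, h1, h2]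

/-! ### From hyperbolicity to tube-stability -/

/-- A homogeneous polynomial that is hyperbolic with respect to `e` and whose hyperbolicity cone
contains the unit vectors of `E` has no zero with imaginary part in the convex cone they span
together with `e` (the coefficient of `e` being positive). -/
theorem tube_of_hyperbolic {σ : Type*} [DecidableEq σ] {P : MvPolynomial σ ℝ} {N : ℕ}
    (hP : P.IsHomogeneous N) (e : σ → ℝ) (hhyp : IsHyperbolicAt P e) (E : Finset σ)
    (hE : ∀ j ∈ E, ∀ t : ℝ, 0 < t →
      MvPolynomial.aeval (fun i => (t : ℂ) * (e i : ℂ) + (unitVec j i : ℂ)) P ≠ 0)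
    (x : σ → ℝ) (a : ℝ) (ha : 0 < a) (b : σ → ℝ) (hb : ∀ i, 0 ≤ b i) :
    MvPolynomial.aeval (fun i => (x i : ℂ) +
      Complex.I * ((a * e i + ∑ j ∈ E, b j * unitVec j i : ℝ) : ℂ)) P ≠ 0 := by
  -- move the generators `δ_j` into the open cone, paying with a bit of the coefficient of `e`
  obtain ⟨ε, hε, hεb⟩ : ∃ ε : ℝ, 0 < ε ∧ 0 < a - ε * ∑ j ∈ E, b j := by
    have hs : 0 ≤ ∑ j ∈ E, b j := Finset.sum_nonneg fun j _ => hb j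
    refine ⟨a / (1 + ∑ j ∈ E, b j), by positivity, ?_⟩
    rw [sub_pos, div_mul_eq_mul_div, div_lt_iff₀ (by positivity)]
    nlinarith
  set u : σ → σ → ℝ := fun j i => unitVec j i + ε * e i with hu
  have huE : ∀ j ∈ E, ∀ t : ℝ, 0 ≤ t →
      MvPolynomial.aeval (fun i => (t : ℂ) * (e i : ℂ) + (u j i : ℂ)) P ≠ 0 := by
    intro j hj t ht
    have := hE j hj (t + ε) (by linarith)
    convert this using 4 with i
    simp only [hu]; push_cast; ring
  set T : Finset σ → Set (σ → ℝ) := fun F => {y | ∃ a : ℝ, 0 < a ∧ ∃ b : σ → ℝ, (∀ j, 0 ≤ b j) ∧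
    y = fun i => a * e i + ∑ j ∈ F, b j * u j i} with hT
  have hconv : ∀ F, Convex ℝ (T F) := by
    intro F
    rintro _ ⟨a₁, ha₁, b₁, hb₁, rfl⟩ _ ⟨a₂, ha₂, b₂, hb₂, rfl⟩ s t hs ht hst
    refine ⟨s * a₁ + t * a₂, ?_, fun j => s * b₁ j + t * b₂ j, fun j => ?_, ?_⟩
    · rcases hs.lt_or_eq with h | h
      · have := mul_pos h ha₁; have := mul_nonneg ht ha₂.le; linarith
      · have : t = 1 := by linarith
        simp [← h, this, ha₂]
    · have := mul_nonneg hs (hb₁ j); have := mul_nonneg ht (hb₂ j); linarith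
    · ext i
      simp only [Pi.add_apply, Pi.smul_apply, smul_eq_mul, mul_add, add_mul, Finset.mul_sum,
        Finset.sum_add_distrib, mul_assoc]
      ring
  have heT : ∀ F, e ∈ T F := fun F => ⟨1, one_pos, 0, by simp, by ext i; simp⟩
  have main : ∀ F : Finset σ, F ⊆ E → ∀ x y : σ → ℝ, y ∈ T F →
      MvPolynomial.aeval (fun i => (x i : ℂ) + Complex.I * (y i : ℂ)) P ≠ 0 := by
    intro F
    induction F using Finset.induction_on with
    | empty =>
      rintro - x _ ⟨a, ha, b, -, rfl⟩ h0
      have := hhyp x (a * Complex.I) (by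
        rw [← h0]
        congr 2; ext i; simp; ring)
      simp at this
      exact ha.ne' this
    | insert k F hk ih =>
      rintro hF x _ ⟨a, ha, b, hb, rfl⟩
      have hkE : k ∈ E := hF (Finset.mem_insert_self k F)
      have := tube_step hP e (u k) (T F) (hconv F) (heT F)
        (ih fun j hj => hF (Finset.mem_insert_of_mem hj)) (by simpa using huE k hkE 0 le_rfl)
        (fun t ht => huE k hkE t ht.le) x _ ⟨a, ha, b, hb, rfl⟩ (b k) (hb k)
      convert this using 4 with i
      simp only [Finset.sum_insert hk]
      push_cast
      ring
  refine main E subset_rfl x _ ⟨a - ε * ∑ j ∈ E, b j, hεb, b, hb, ?_⟩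
  ext i
  simp only [hu, mul_add, Finset.sum_add_distrib, sub_mul, Finset.mul_sum, Finset.sum_mul]
  have : ∀ j, b j * (ε * e i) = ε * b j * e i := fun j => by ring
  simp only [this]
  ring

/-! ### Homogenizing the real zero extension -/

theorem aeval_restrictTo {σ K : Type*} [DecidableEq σ] [CommRing K] [Algebra ℝ K] (S : Finset σ)
    (P : MvPolynomial σ ℝ) (z : σ → K) :
    MvPolynomial.aeval z (restrictTo S P)
      = MvPolynomial.aeval (fun i => if i ∈ S then z i else 0) P := by
  rw [restrictTo, MvPolynomial.comp_aeval_apply]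
  congr 2
  ext i
  split_ifs <;> simp

theorem aeval_setVarOne_shiftSub {σ K : Type*} [DecidableEq σ] [CommRing K] [Algebra ℝ K]
    (E₀ : Finset σ) (e₀ : σ) (P : MvPolynomial σ ℝ) (z : σ → K) :
    MvPolynomial.aeval z (setVarOne e₀ (shiftSub E₀ e₀ P))
      = MvPolynomial.aeval (fun i => if i = e₀ then 1 else
          if i ∈ E₀ then 1 + z i else z i) P := by
  rw [setVarOne, shiftSub, MvPolynomial.comp_aeval_apply, MvPolynomial.comp_aeval_apply]
  congr 2
  ext i
  by_cases h : i = e₀ <;> by_cases h' : i ∈ E₀ <;> simp [h, h']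

theorem restrictTo_isHomogeneous {σ : Type*} [DecidableEq σ] {P : MvPolynomial σ ℝ} {d : ℕ}
    (hP : P.IsHomogeneous d) (S : Finset σ) : (restrictTo S P).IsHomogeneous d := by
  have := hP.aeval (n := 1) (fun i => if i ∈ S then MvPolynomial.X (R := ℝ) i else 0) (fun i => by
    split_ifs
    · exact MvPolynomial.isHomogeneous_X ℝ i
    · exact MvPolynomial.isHomogeneous_zero σ ℝ 1)
  simpa [restrictTo] using this

/-- The homogenization of `Q` in degree `D` with respect to `x e₀`, followed by the substitution
`x i ↦ x i - x e₀` for `i ∈ E₀ \ {e₀}`; it undoes `setVarOne e₀ ∘ shiftSub E₀ e₀`. -/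
noncomputable def amalgPoly {σ : Type*} [DecidableEq σ] (E₀ : Finset σ) (e₀ : σ) (D : ℕ)
    (Q : MvPolynomial σ ℝ) : MvPolynomial σ ℝ :=
  ∑ m ∈ Q.support, MvPolynomial.C (Q.coeff m) * (MvPolynomial.X e₀ ^ (D - m.degree) *
    ∏ i ∈ m.support, (MvPolynomial.X i - if i ∈ E₀ ∧ i ≠ e₀ then MvPolynomial.X e₀ else 0) ^ m i)

theorem amalgPoly_isHomogeneous {σ : Type*} [DecidableEq σ] (E₀ : Finset σ) (e₀ : σ) {D : ℕ}
    {Q : MvPolynomial σ ℝ} (hD : Q.totalDegree ≤ D) : (amalgPoly E₀ e₀ D Q).IsHomogeneous D := by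
  refine MvPolynomial.IsHomogeneous.sum _ _ _ fun m hm => ?_
  have hmD : m.degree ≤ D := (MvPolynomial.le_totalDegree hm).trans hD
  have h1 : (∏ i ∈ m.support, (MvPolynomial.X (R := ℝ) i -
      if i ∈ E₀ ∧ i ≠ e₀ then MvPolynomial.X e₀ else 0) ^ m i).IsHomogeneous m.degree := by
    refine MvPolynomial.IsHomogeneous.prod _ _ _ fun i _ => ?_
    have h2 : (MvPolynomial.X (R := ℝ) i -
        if i ∈ E₀ ∧ i ≠ e₀ then MvPolynomial.X e₀ else 0).IsHomogeneous 1 := by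
      refine (MvPolynomial.isHomogeneous_X ℝ i).sub ?_
      split_ifs
      · exact MvPolynomial.isHomogeneous_X ℝ e₀
      · exact MvPolynomial.isHomogeneous_zero σ ℝ 1
    simpa using h2.pow (m i)
  have h3 := ((MvPolynomial.isHomogeneous_X ℝ e₀).pow (D - m.degree)).mul h1
  have h4 := (MvPolynomial.isHomogeneous_C σ (Q.coeff m)).mul h3
  convert h4 using 1
  omega

theorem aeval_amalgPoly {σ K : Type*} [DecidableEq σ] [Field K] [Algebra ℝ K] (E₀ : Finset σ)
    (e₀ : σ) {D : ℕ} {Q : MvPolynomial σ ℝ} (hD : Q.totalDegree ≤ D) (z : σ → K) (hz : z e₀ ≠ 0) :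
    MvPolynomial.aeval z (amalgPoly E₀ e₀ D Q) = z e₀ ^ D * MvPolynomial.aeval
      (fun i => (z e₀)⁻¹ * (z i - if i ∈ E₀ ∧ i ≠ e₀ then z e₀ else 0)) Q := by
  rw [MvPolynomial.aeval_def _ Q, MvPolynomial.eval₂_eq, amalgPoly, map_sum, Finset.mul_sum]
  refine Finset.sum_congr rfl fun m hm => ?_
  have hmD : m.degree ≤ D := (MvPolynomial.le_totalDegree hm).trans hD
  simp only [map_mul, map_pow, map_prod, map_sub, MvPolynomial.aeval_X, MvPolynomial.aeval_C,
    apply_ite (MvPolynomial.aeval z), map_zero, mul_pow, Finset.prod_mul_distrib,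
    Finset.prod_pow_eq_pow_sum]
  change _ = z e₀ ^ D * (_ * ((z e₀)⁻¹ ^ m.degree * _))
  have h : z e₀ ^ D = z e₀ ^ (D - m.degree) * z e₀ ^ m.degree := by
    rw [← pow_add, Nat.sub_add_cancel hmD]
  have h' : z e₀ ^ m.degree * (z e₀)⁻¹ ^ m.degree = 1 := by
    rw [← mul_pow, mul_inv_cancel₀ hz, one_pow]
  rw [h]
  linear_combination (-(algebraMap ℝ K (Q.coeff m) * z e₀ ^ (D - m.degree) *
    ∏ i ∈ m.support, (z i - if i ∈ E₀ ∧ i ≠ e₀ then z e₀ else 0) ^ m i)) * h'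

/-- On vectors supported on `E_k` the homogenization agrees with `P_k` up to a power of `x e₀`. -/
theorem aeval_amalgPoly_eq {σ K : Type*} [DecidableEq σ] [Field K] [Algebra ℝ K]
    {E₀ Ek : Finset σ} {e₀ : σ} {d c : ℕ} {P Q : MvPolynomial σ ℝ} (hD : Q.totalDegree ≤ c + d)
    (hP : P.IsHomogeneous d) (hE₀ : E₀ ⊆ Ek) (hQe : e₀ ∉ Q.vars)
    (hQ : restrictTo (Ek.erase e₀) Q = setVarOne e₀ (shiftSub E₀ e₀ P))
    (z : σ → K) (hz : z e₀ ≠ 0) (hzE : ∀ i, i ∉ Ek → z i = 0) :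
    MvPolynomial.aeval z (amalgPoly E₀ e₀ (c + d) Q) = z e₀ ^ c * MvPolynomial.aeval z P := by
  set y : σ → K := fun i => (z e₀)⁻¹ * (z i - if i ∈ E₀ ∧ i ≠ e₀ then z e₀ else 0) with hy
  have h1 : MvPolynomial.aeval y Q = MvPolynomial.aeval (fun i => (z e₀)⁻¹ * z i) P := by
    have h2 : MvPolynomial.aeval y Q = MvPolynomial.aeval y (restrictTo (Ek.erase e₀) Q) := by
      rw [aeval_restrictTo]
      refine aeval_congr_vars fun i hi => ?_
      have hie : i ≠ e₀ := fun h => hQe (h ▸ hi)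
      by_cases hiE : i ∈ Ek
      · simp [hie, hiE]
      · have : i ∉ E₀ := fun h => hiE (hE₀ h)
        simp [hy, hiE, this, hzE i hiE]
    rw [h2, hQ, aeval_setVarOne_shiftSub]
    congr 2
    ext i
    by_cases hie : i = e₀
    · simp [hie, hz]
    · by_cases hi : i ∈ E₀
      · simp only [hy, hie, hi, if_true, if_false, ne_eq, not_false_eq_true, and_self]
        field_simp
        ring
      · simp [hy, hie, hi]
  rw [aeval_amalgPoly E₀ e₀ hD z hz, h1, aeval_scale hP, pow_add, mul_assoc, ← mul_assoc (z e₀ ^ d),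
    ← mul_pow, mul_inv_cancel₀ hz, one_pow, one_mul]

theorem aeval_amalgPoly_congr {σ K : Type*} [DecidableEq σ] [Field K] [Algebra ℝ K]
    {E₀ E : Finset σ} {e₀ : σ} {D : ℕ} {Q : MvPolynomial σ ℝ} (hD : Q.totalDegree ≤ D)
    (he : e₀ ∈ E) (hv : Q.vars ⊆ E) {z w : σ → K} (hz : z e₀ ≠ 0) (h : ∀ i ∈ E, z i = w i) :
    MvPolynomial.aeval z (amalgPoly E₀ e₀ D Q) = MvPolynomial.aeval w (amalgPoly E₀ e₀ D Q) := by
  rw [aeval_amalgPoly E₀ e₀ hD z hz, aeval_amalgPoly E₀ e₀ hD w (h e₀ he ▸ hz), h e₀ he]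
  congr 1
  refine aeval_congr_vars fun i hi => ?_
  rw [h i (hv hi)]

/-- The homogenization of a real zero polynomial is hyperbolic with respect to the indicator vector
of `E₀`: dividing by the `e₀`-coordinate turns a zero on a line into a zero on a line through the
origin. -/
theorem amalgPoly_hyperbolic {σ : Type*} [DecidableEq σ] {E₀ : Finset σ} {e₀ : σ} {D : ℕ}
    {Q : MvPolynomial σ ℝ} (hD : Q.totalDegree ≤ D) (he : e₀ ∈ E₀) (hQe : e₀ ∉ Q.vars)
    (hQ : IsRealZero Q) :
    IsHyperbolicAt (amalgPoly E₀ e₀ D Q) (indVec E₀) := by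
  intro v t h0
  by_contra ht
  have he1 : indVec E₀ e₀ = 1 := by simp [indVec, he]
  set z : σ → ℂ := fun i => t * (indVec E₀ i : ℂ) + (v i : ℂ) with hz
  have hze : z e₀ = t + v e₀ := by simp [hz, he1]
  have hzim : (z e₀).im ≠ 0 := by simpa [hze] using ht
  have hz0 : z e₀ ≠ 0 := fun h => hzim (by rw [h]; rfl)
  rw [aeval_amalgPoly E₀ e₀ hD z hz0] at h0
  have h1 := (mul_eq_zero.1 h0).resolve_left (pow_ne_zero _ hz0)
  have h2 := hQ (fun i => v i - if i ∈ E₀ then v e₀ else 0) (z e₀)⁻¹ (by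
    rw [← h1]
    refine aeval_congr_vars fun i hi => ?_
    have hie : i ≠ e₀ := fun h => hQe (h ▸ hi)
    congr 1
    by_cases hi : i ∈ E₀
    · simp [hz, hie, hi, indVec, he]
    · simp [hz, hi, indVec])
  rw [Complex.inv_im, div_eq_zero_iff] at h2
  rcases h2 with h | h
  · exact hzim (by linarith)
  · exact hz0 (Complex.normSq_eq_zero.1 h)

/-! ### Tube-stability and ranks of the amalgamated polynomial -/

theorem IsStablePoly.tubeStable {σ : Type*} {P : MvPolynomial σ ℝ} (hP : IsStablePoly P) :
    TubeStable P Set.univ :=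
  fun z _ hz => hP z fun i => hz i (Set.mem_univ i)

/-- The closure form of `TubeStable.mono`: moving a nonnegative point in a nonnegative direction
cannot create a zero of a stable polynomial. -/
theorem IsStablePoly.aeval_add_ne_zero {σ : Type*} {P : MvPolynomial σ ℝ} (hS : IsStablePoly P)
    {N : ℕ} (hP : P.IsHomogeneous N) {z u : σ → ℝ} (hz : ∀ i, 0 ≤ z i) (hu : ∀ i, 0 ≤ u i)
    (h0 : MvPolynomial.aeval z P ≠ 0) : MvPolynomial.aeval (fun i => z i + u i) P ≠ 0 := by
  have hcont : ∀ w : σ → ℝ, Filter.Tendsto (fun ε : ℝ => |(linePoly w 1 P).eval ε|)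
      (nhdsWithin 0 (Set.Ioi 0)) (nhds |MvPolynomial.aeval w P|) := by
    intro w
    have h1 : Continuous fun ε : ℝ => |(linePoly w 1 P).eval ε| :=
      (linePoly w 1 P).continuous.abs
    have h2 := h1.tendsto 0
    rw [linePoly_eval_real] at h2
    simp only [zero_mul, add_zero] at h2
    exact h2.mono_left nhdsWithin_le_nhds
  have hle : |MvPolynomial.aeval z P| ≤ |MvPolynomial.aeval (fun i => z i + u i) P| := by
    refine le_of_tendsto_of_tendsto (hcont z) (hcont _) ?_
    filter_upwards [self_mem_nhdsWithin] with ε hε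
    rw [linePoly_eval_real, linePoly_eval_real]
    have hε' : (0 : ℝ) < ε := hε
    have h := hS.tubeStable.mono hP (z := fun i => z i + ε * (1 : σ → ℝ) i)
      ⟨fun i => by simpa using add_nonneg (hz i) hε'.le,
        fun i _ => by simpa using add_pos_of_nonneg_of_pos (hz i) hε'⟩ hu
    refine h.trans_eq ?_
    congr 3
    ext i
    ring
  exact abs_pos.1 ((abs_pos.2 h0).trans_le hle)

/-- A stable extension `P` of a stable polynomial `restrictTo E₀ P` does not vanish at positive
multiples of `1_{E₀}`, even after adding a nonnegative vector. -/
theorem IsStablePoly.aeval_indVec_ne_zero {σ : Type*} [DecidableEq σ] {P : MvPolynomial σ ℝ}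
    {E₀ : Finset σ} (hS : IsStablePoly P) (hS₀ : IsStablePoly (restrictTo E₀ P)) {N : ℕ}
    (hP : P.IsHomogeneous N) {t : ℝ} (ht : 0 < t) {u : σ → ℝ} (hu : ∀ i, 0 ≤ u i) :
    MvPolynomial.aeval (fun i => t * indVec E₀ i + u i) P ≠ 0 := by
  refine hS.aeval_add_ne_zero hP (fun i => mul_nonneg ht.le (indVec_nonneg E₀ i)) hu ?_
  have h := hS₀.tubeStable.aeval_ne_zero (restrictTo_isHomogeneous hP E₀) (z := fun _ => t)
    ⟨fun _ => ht.le, fun _ _ => ht⟩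
  rw [aeval_restrictTo] at h
  have hfun : (fun i => t * indVec E₀ i) = fun i => if i ∈ E₀ then t else 0 := by
    ext i
    simp [indVec]
  rwa [hfun]

/-- The homogenization of a real zero polynomial is tube-stable as soon as the unit vectors of `E`
lie in its hyperbolicity cone at `1_{E₀}` (hypothesis `hcone`). A point of the tube has imaginary
part `a • 1_{E₀}` plus a nonnegative combination of unit vectors, `a` being the least imaginary
part on `E₀`. -/
theorem amalgPoly_tubeStable {σ : Type*} [DecidableEq σ] {E₀ E : Finset σ} {e₀ : σ} {D : ℕ}
    {Q : MvPolynomial σ ℝ} (hD : Q.totalDegree ≤ D) (he : e₀ ∈ E₀) (hE₀ : E₀ ⊆ E)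
    (hQe : e₀ ∉ Q.vars) (hQE : Q.vars ⊆ E) (hQ : IsRealZero Q)
    (hcone : ∀ j ∈ E, ∀ t : ℝ, 0 < t →
      MvPolynomial.aeval (fun i => t * indVec E₀ i + unitVec j i) (amalgPoly E₀ e₀ D Q) ≠ 0) :
    TubeStable (amalgPoly E₀ e₀ D Q) (E₀ : Set σ) := by
  intro z hz hzpos
  obtain ⟨i₀, hi₀, hmin⟩ := E₀.exists_min_image (fun i => (z i).im) ⟨e₀, he⟩
  set a := (z i₀).im with ha
  have hze : z e₀ ≠ 0 := fun h => by
    have := hzpos e₀ he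
    simp [h] at this
  have key := tube_of_hyperbolic (amalgPoly_isHomogeneous E₀ e₀ hD) (indVec E₀)
    (amalgPoly_hyperbolic hD he hQe hQ) E (fun j hj t ht => by
      have h := hcone j hj t ht
      have h' := aeval_ofReal (amalgPoly E₀ e₀ D Q) (fun i => t * indVec E₀ i + unitVec j i)
      push_cast at h'
      rw [h']
      exact_mod_cast h)
    (fun i => (z i).re) a (hzpos i₀ hi₀) (fun j => (z j).im - a * indVec E₀ j) (fun j => by
      unfold indVec
      split_ifs with hj
      · have := hmin j hj
        linarith
      · simpa using hz j)
  refine fun h => key ?_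
  rw [← h]
  refine (aeval_amalgPoly_congr hD (hE₀ he) hQE hze fun i hi => ?_).symm
  have hsum : ∑ j ∈ E, ((z j).im - a * indVec E₀ j) * unitVec j i
      = (z i).im - a * indVec E₀ i := by
    simp [unitVec, hi]
  rw [hsum, add_sub_cancel, mul_comm, Complex.re_add_im]

/-- For `S ⊆ E_k` the degree of the homogenization along `1_S` is the support rank of `P_k`, plus
the excess `c` caused by the factor `x e₀ ^ c` when `e₀ ∈ S`. The tube-stability of `P_k` inherited
from the homogenization also makes its support rank monotone. -/
theorem dirRank_amalgPoly {σ : Type*} [DecidableEq σ]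
    {E₀ Ek : Finset σ} {e₀ : σ} {d c : ℕ} {P Q : MvPolynomial σ ℝ} (hD : Q.totalDegree ≤ c + d)
    (hP : P.IsHomogeneous d) (hP0 : P ≠ 0) (hv : P.vars ⊆ Ek) (he : e₀ ∈ E₀) (hE₀ : E₀ ⊆ Ek)
    (hQe : e₀ ∉ Q.vars)
    (hQ : restrictTo (Ek.erase e₀) Q = setVarOne e₀ (shiftSub E₀ e₀ P))
    (hA : TubeStable (amalgPoly E₀ e₀ (c + d) Q) (E₀ : Set σ)) :
    (∀ S ⊆ Ek, dirRank (amalgPoly E₀ e₀ (c + d) Q) (indVec E₀) (indVec S)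
      = polyRank (suppSet P) S + if e₀ ∈ S then c else 0) ∧
    ∀ S T, S ⊆ T → polyRank (suppSet P) S ≤ polyRank (suppSet P) T := by
  have hPst : TubeStable P (E₀ : Set σ) := by
    intro z hz hzpos h0
    set w : σ → ℂ := fun i => if i ∈ Ek then z i else 0 with hw
    have hwe : w e₀ = z e₀ := if_pos (hE₀ he)
    have hze : z e₀ ≠ 0 := fun h => by
      have := hzpos e₀ he
      simp [h] at this
    have h1 := aeval_amalgPoly_eq hD hP hE₀ hQe hQ w (hwe ▸ hze) fun i hi => if_neg hi
    refine hA w (fun i => ?_) (fun i hi => ?_) ?_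
    · simp only [hw]
      split_ifs
      · exact hz i
      · simp
    · simp only [hw, if_pos (hE₀ hi)]
      exact hzpos i hi
    · rw [h1, aeval_congr_vars (w := z) fun i hi => if_pos (hv hi), h0, mul_zero]
  have hrank := hPst.dirRank_indVec hP hP0
  refine ⟨fun S hS => ?_, fun S T hST => ?_⟩
  · rw [← hrank]
    have hline : linePoly (indVec E₀) (indVec S) (amalgPoly E₀ e₀ (c + d) Q)
        = linePoly (indVec E₀) (indVec S) P
          * (Polynomial.C (indVec S e₀) * Polynomial.X + Polynomial.C 1) ^ c := by
      refine Polynomial.eq_of_infinite_eval_eq _ _ ((Set.Ioi_infinite (0 : ℝ)).mono fun t ht => ?_)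
      have ht : 0 < t := ht
      have he1 : indVec E₀ e₀ = 1 := by simp [indVec, he]
      have hpos : indVec E₀ e₀ + t * indVec S e₀ ≠ 0 := by
        have := mul_nonneg ht.le (indVec_nonneg S e₀)
        rw [he1]
        linarith
      have := aeval_amalgPoly_eq hD hP hE₀ hQe hQ (fun i => indVec E₀ i + t * indVec S i) hpos
        fun i hi => by
          have h1 : i ∉ S := fun h => hi (hS h)
          have h2 : i ∉ E₀ := fun h => hi (hE₀ h)
          simp [indVec, h1, h2]
      rw [Set.mem_ofPred_eq, Polynomial.eval_mul, linePoly_eval_real, linePoly_eval_real, this, he1]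
      simp only [Polynomial.eval_pow, Polynomial.eval_add, Polynomial.eval_mul, Polynomial.eval_C,
        Polynomial.eval_X]
      ring
    have hne : (Polynomial.C (indVec S e₀) * Polynomial.X + Polynomial.C (1 : ℝ)) ≠ 0 := fun h => by
      have := congrArg (Polynomial.eval 0) h
      simp at this
    rw [dirRank, dirRank, hline, Polynomial.natDegree_mul
      (hPst.line_ne_zero hP (indVec_mem_posOn E₀)) (pow_ne_zero _ hne), Polynomial.natDegree_pow]
    congr 1
    by_cases h : e₀ ∈ S
    · rw [Polynomial.natDegree_linear (by simp [indVec, h])]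
      simp [h]
    · simp [indVec, h]
  · rw [← hrank, ← hrank]
    refine hPst.dirRank_le hP (indVec_mem_posOn E₀) (indVec_nonneg S) 1 le_rfl fun i => ?_
    by_cases h : i ∈ S
    · simp [indVec, h, hST h]
    · simpa [indVec, h] using indVec_nonneg T i

/-- Removing an excess `c` at the element `e₀` from a polymatroid `r`. Away from `e₀`, taking the
minimum with `r (insert e₀ S) - c` restores monotonicity. -/
theorem isPolymatroidOn_reduce {σ : Type*} [DecidableEq σ] (E : Finset σ) (e₀ : σ) (c : ℕ)
    (r : Finset σ → ℕ) (h0 : r ∅ = 0) (hmono : ∀ S T, S ⊆ T → r S ≤ r T)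
    (hsub : ∀ S T, r (S ∪ T) + r (S ∩ T) ≤ r S + r T) (hc : ∀ S, e₀ ∈ S → c ≤ r S) :
    IsPolymatroidOn E
      (fun S => if e₀ ∈ S then r S - c else min (r S) (r (insert e₀ S) - c)) := by
  have hci : ∀ S, c ≤ r (insert e₀ S) := fun S => hc _ (Finset.mem_insert_self _ _)
  refine ⟨by simp [h0], fun S T hST _ => ?_, fun S T _ _ => ?_⟩
  · have h1 := hmono S T hST
    have h2 := hmono _ _ (Finset.insert_subset_insert e₀ hST)
    by_cases hS : e₀ ∈ S
    · simp only [hS, hST hS, if_true]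
      omega
    · by_cases hT : e₀ ∈ T
      · rw [Finset.insert_eq_of_mem hT] at h2
        simp only [hS, hT, if_true, if_false]
        omega
      · simp only [hS, hT, if_false]
        omega
  · have hST := hsub S T
    by_cases hS : e₀ ∈ S <;> by_cases hT : e₀ ∈ T
    · have := hc _ (Finset.mem_inter.2 ⟨hS, hT⟩)
      have := hc _ (Finset.mem_union_left T hS)
      have := hc _ hS
      have := hc _ hT
      simp only [Finset.mem_union, Finset.mem_inter, hS, hT, or_self, and_self, if_true]
      omega
    · have h1 := hsub S (insert e₀ T)
      rw [Finset.union_insert, Finset.insert_eq_of_mem (Finset.mem_union_left T hS),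
        Finset.inter_insert_of_mem hS] at h1
      have := hc _ (Finset.mem_union_left T hS)
      have := hc _ hS
      have := hci T
      have := hci (S ∩ T)
      simp only [Finset.mem_union, Finset.mem_inter, hS, hT, or_false, and_false, if_true, if_false]
      omega
    · have h1 := hsub (insert e₀ S) T
      rw [Finset.insert_union, Finset.insert_eq_of_mem (Finset.mem_union_right S hT),
        Finset.insert_inter_of_mem hT] at h1
      have := hc _ (Finset.mem_union_right S hT)
      have := hc _ hT
      have := hci S
      have := hci (S ∩ T)
      simp only [Finset.mem_union, Finset.mem_inter, hS, hT, false_or, false_and, if_true, if_false]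
      omega
    · have h1 := hsub (insert e₀ S) T
      have h2 := hsub S (insert e₀ T)
      have h3 := hsub (insert e₀ S) (insert e₀ T)
      rw [Finset.insert_union, Finset.insert_inter_of_notMem hT] at h1
      rw [Finset.union_insert, Finset.inter_insert_of_notMem hS] at h2
      rw [Finset.insert_union, Finset.union_insert, Finset.insert_idem,
        ← Finset.insert_inter_distrib] at h3
      have := hci S
      have := hci T
      have := hci (S ∪ T)
      have := hci (S ∩ T)
      simp only [Finset.mem_union, Finset.mem_inter, hS, hT, or_self, and_self, if_false]
      omega

/-! ### Existence of the amalgam -/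

/-- if the real zero polynomials `Q₁, Q₂` (obtained from the homogeneous
stable polynomials `P₁, P₂` by the substitutions `x_i ↦ x₀ + x_i` for `i ∈ E₀ \ {0}`
followed by `x₀ = 1`) admit a common real zero extension `Q`, then the polymatroids
`r_{supp P₁}` and `r_{supp P₂}` have an amalgam. -/
theorem realzero_amalgam_polymatroid {σ : Type*} [DecidableEq σ]
    (E₁ E₂ : Finset σ) (e₀ : σ) (he₀ : e₀ ∈ E₁ ∩ E₂)
    (P₀ P₁ P₂ : MvPolynomial σ ℝ)
    (hv₀ : P₀.vars ⊆ E₁ ∩ E₂) (hv₁ : P₁.vars ⊆ E₁) (hv₂ : P₂.vars ⊆ E₂)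
    (hne₀ : P₀ ≠ 0) (hne₁ : P₁ ≠ 0) (hne₂ : P₂ ≠ 0)
    (hhom₀ : ∃ d, P₀.IsHomogeneous d) (hhom₁ : ∃ d, P₁.IsHomogeneous d)
    (hhom₂ : ∃ d, P₂.IsHomogeneous d)
    (hst₀ : IsStablePoly P₀) (hst₁ : IsStablePoly P₁) (hst₂ : IsStablePoly P₂)
    (hres₁ : restrictTo (E₁ ∩ E₂) P₁ = P₀) (hres₂ : restrictTo (E₁ ∩ E₂) P₂ = P₀)
    (Q : MvPolynomial σ ℝ) (hQrz : IsRealZero Q)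
    (hQvars : Q.vars ⊆ (E₁ ∪ E₂).erase e₀)
    (hQ₁ : restrictTo (E₁.erase e₀) Q =
      setVarOne e₀ (shiftSub (E₁ ∩ E₂) e₀ P₁))
    (hQ₂ : restrictTo (E₂.erase e₀) Q =
      setVarOne e₀ (shiftSub (E₁ ∩ E₂) e₀ P₂)) :
    ∃ r : Finset σ → ℕ, IsPolymatroidOn (E₁ ∪ E₂) r ∧
      (∀ S : Finset σ, S ⊆ E₁ → r S = polyRank (suppSet P₁) S) ∧
      (∀ S : Finset σ, S ⊆ E₂ → r S = polyRank (suppSet P₂) S) := by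
  obtain ⟨d, hd₁⟩ := hhom₁
  obtain ⟨d', hd₂⟩ := hhom₂
  -- both degrees equal the degree of the common restriction `P₀`
  have hdd : d' = d := by
    have h1 := hres₁ ▸ restrictTo_isHomogeneous hd₁ (E₁ ∩ E₂)
    have h2 := hres₂ ▸ restrictTo_isHomogeneous hd₂ (E₁ ∩ E₂)
    exact h2.inj_right h1 hne₀
  subst hdd
  set E₀ := E₁ ∩ E₂ with hE₀
  set c := Q.totalDegree with hc
  have hD : Q.totalDegree ≤ c + d' := Nat.le_add_right _ _
  have hE₁ : E₀ ⊆ E₁ := Finset.inter_subset_left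
  have hE₂ : E₀ ⊆ E₂ := Finset.inter_subset_right
  have hQe : e₀ ∉ Q.vars := fun h => Finset.notMem_erase e₀ _ (hQvars h)
  have hQE : Q.vars ⊆ E₁ ∪ E₂ := hQvars.trans (Finset.erase_subset _ _)
  have hcone : ∀ (Ek : Finset σ) (P : MvPolynomial σ ℝ), P.IsHomogeneous d' → IsStablePoly P →
      restrictTo E₀ P = P₀ → E₀ ⊆ Ek →
      restrictTo (Ek.erase e₀) Q = setVarOne e₀ (shiftSub E₀ e₀ P) → ∀ j ∈ Ek, ∀ t : ℝ, 0 < t →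
      MvPolynomial.aeval (fun i => t * indVec E₀ i + unitVec j i)
        (amalgPoly E₀ e₀ (c + d') Q) ≠ 0 := by
    intro Ek P hP hst hres hEk hQ j hj t ht
    have hu : ∀ i, 0 ≤ unitVec j i := fun i => by
      unfold unitVec
      split_ifs <;> norm_num
    have hpos : t * indVec E₀ e₀ + unitVec j e₀ ≠ 0 := by
      have h1 : indVec E₀ e₀ = 1 := by simp [indVec, he₀]
      have := hu e₀
      rw [h1]
      linarith
    rw [aeval_amalgPoly_eq hD hP hEk hQe hQ _ hpos fun i hi => by
      have h1 : i ∉ E₀ := fun h => hi (hEk h)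
      have h2 : i ≠ j := fun h => hi (h ▸ hj)
      simp [indVec, unitVec, h1, h2]]
    exact mul_ne_zero (pow_ne_zero _ hpos) (hst.aeval_indVec_ne_zero (hres ▸ hst₀) hP ht hu)
  have hA : TubeStable (amalgPoly E₀ e₀ (c + d') Q) (E₀ : Set σ) := by
    refine amalgPoly_tubeStable hD he₀ (hE₁.trans Finset.subset_union_left) hQe hQE hQrz
      fun j hj => ?_
    rcases Finset.mem_union.1 hj with h | h
    · exact hcone E₁ P₁ hd₁ hst₁ hres₁ hE₁ hQ₁ j h
    · exact hcone E₂ P₂ hd₂ hst₂ hres₂ hE₂ hQ₂ j h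
  obtain ⟨h0, hmono, hsub⟩ := hA.dirRank_polymatroid (amalgPoly_isHomogeneous E₀ e₀ hD)
  obtain ⟨hr₁, hm₁⟩ := dirRank_amalgPoly hD hd₁ hne₁ hv₁ he₀ hE₁ hQe hQ₁ hA
  obtain ⟨hr₂, hm₂⟩ := dirRank_amalgPoly hD hd₂ hne₂ hv₂ he₀ hE₂ hQe hQ₂ hA
  set r : Finset σ → ℕ := fun S =>
    dirRank (amalgPoly E₀ e₀ (c + d') Q) (indVec E₀) (indVec S) with hr
  have hcr : ∀ S, e₀ ∈ S → c ≤ r S := fun S hS => by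
    have h1 := hmono {e₀} S (Finset.singleton_subset_iff.2 hS)
    have h2 := hr₁ {e₀} (Finset.singleton_subset_iff.2 (hE₁ he₀))
    rw [if_pos (Finset.mem_singleton_self e₀)] at h2
    simp only [hr]
    omega
  have hrestr : ∀ (Ek : Finset σ) (ρ : Finset σ → ℕ), e₀ ∈ Ek →
      (∀ S ⊆ Ek, r S = ρ S + if e₀ ∈ S then c else 0) → (∀ S T, S ⊆ T → ρ S ≤ ρ T) →
      ∀ S ⊆ Ek, (if e₀ ∈ S then r S - c else min (r S) (r (insert e₀ S) - c)) = ρ S := by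
    intro Ek ρ hek hrk hm S hS
    have h1 := hrk S hS
    split_ifs with h
    · rw [if_pos h] at h1
      omega
    · have h2 := hrk (insert e₀ S) (Finset.insert_subset hek hS)
      have h3 := hm S _ (Finset.subset_insert e₀ S)
      rw [if_neg h] at h1
      rw [if_pos (Finset.mem_insert_self _ _)] at h2
      omega
  exact ⟨_, isPolymatroidOn_reduce (E₁ ∪ E₂) e₀ c r h0 hmono hsub hcr,
    hrestr E₁ _ (hE₁ he₀) hr₁ hm₁, hrestr E₂ _ (hE₂ he₀) hr₂ hm₂⟩
end

section
/- Define r₁ : 2^{\{0,1,2,3\}} → ℕ₀ by: r₁(∅) = 0, r₁({3}) = 1, r₁({i}) = 2 for i ∈ {0,1,2}, r₁({i,3}) = 2 for i ∈ {0,1,2}, and r₁(S) = 3 for every S containing at least two elements of {0,1,2}. Define r₂ : 2^{\{0,1,2,4\}} → ℕ₀ by: r₂(∅) = 0, r₂({4}) = 1, r₂({i}) = 2 for i ∈ {0,1,2}, r₂({0,4}) = 2, r₂({2,4}) = 2, r₂({1,4}) = 3, and r₂(S) = 3 for every S containing at least two elements of {0,1,2}. Then for every positive integer m there is no polymatroid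 r on {0,1,2,3,4} whose restriction to {0,1,2,3} equals m·r₁ and whose restriction to {0,1,2,4} equals m·r₂; that is, the polymatroids m·r₁ and m·r₂ do not have an amalgam. -/
/-- The polymatroid `r₁` on `{0,1,2,3}`: `r₁ ∅ = 0`, `r₁ {3} = 1`, `r₁ {i} = r₁ {i,3} = 2`
for `i ∈ {0,1,2}`, and `r₁ S = 3` whenever `S` contains at least two of `0, 1, 2`. -/
def rOne (S : Finset (Fin 5)) : ℕ :=
  if 2 ≤ (S ∩ {0, 1, 2}).card then 3
  else if (S ∩ {0, 1, 2}).card = 1 then 2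
  else if 3 ∈ S then 1
  else 0

/-- The polymatroid `r₂` on `{0,1,2,4}`: `r₂ ∅ = 0`, `r₂ {4} = 1`, `r₂ {i} = 2` for
`i ∈ {0,1,2}`, `r₂ {0,4} = r₂ {2,4} = 2`, `r₂ {1,4} = 3`, and `r₂ S = 3` whenever
`S` contains at least two of `0, 1, 2`. -/
def rTwo (S : Finset (Fin 5)) : ℕ :=
  if 2 ≤ (S ∩ {0, 1, 2}).card then 3
  else if 1 ∈ S ∧ 4 ∈ S then 3
  else if (S ∩ {0, 1, 2}).card = 1 then 2
  else if 4 ∈ S then 1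
  else 0

/-- for every `m ≥ 1` the polymatroids `m • r₁` and `m • r₂` do not have an
amalgam: there is no polymatroid `r` on `{0,1,2,3,4}` restricting to `m • r₁` on
`{0,1,2,3}` and to `m • r₂` on `{0,1,2,4}`. -/
theorem no_amalgam_of_scaled_polymatroids (m : ℕ) (hm : 0 < m) :
    ¬ ∃ r : Finset (Fin 5) → ℕ,
      IsPolymatroidOn ({0, 1, 2, 3, 4} : Finset (Fin 5)) r ∧
      (∀ S : Finset (Fin 5), S ⊆ {0, 1, 2, 3} → r S = m * rOne S) ∧
      (∀ S : Finset (Fin 5), S ⊆ {0, 1, 2, 4} → r S = m * rTwo S) := by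
  rintro ⟨r, ⟨-, mono, sub⟩, h1, h2⟩
  -- Submodularity with the union and intersection given as explicit sets.
  have key (S T U I : Finset (Fin 5)) (hU : S ∪ T = U) (hI : S ∩ T = I)
      (hS : S ⊆ {0, 1, 2, 3, 4}) (hT : T ⊆ {0, 1, 2, 3, 4}) : r U + r I ≤ r S + r T := by
    subst hU hI
    exact sub S T hS hT
  have e0 : r {0} = m * 2 := h1 {0} (by decide)
  have e2 : r {2} = m * 2 := h1 {2} (by decide)
  have e3 : r {3} = m * 1 := h1 {3} (by decide)
  have e03 : r {0, 3} = m * 2 := h1 {0, 3} (by decide)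
  have e13 : r {1, 3} = m * 2 := h1 {1, 3} (by decide)
  have e23 : r {2, 3} = m * 2 := h1 {2, 3} (by decide)
  have e02 : r {0, 2} = m * 3 := h1 {0, 2} (by decide)
  have e04 : r {0, 4} = m * 2 := h2 {0, 4} (by decide)
  have e24 : r {2, 4} = m * 2 := h2 {2, 4} (by decide)
  have e14 : r {1, 4} = m * 3 := h2 {1, 4} (by decide)
  -- Adding `3` and `4` to either of `0`, `2` does not raise the rank.
  have s0 : r {0, 3, 4} + r {0} ≤ r {0, 3} + r {0, 4} :=
    key {0, 3} {0, 4} _ _ (by decide) (by decide) (by decide) (by decide)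
  have s2 : r {2, 3, 4} + r {2} ≤ r {2, 3} + r {2, 4} :=
    key {2, 3} {2, 4} _ _ (by decide) (by decide) (by decide) (by decide)
  -- Hence `{3, 4}` lies in the intersection of the lines `0` and `2` and has rank at most `m`.
  have s34 : r {0, 2, 3, 4} + r {3, 4} ≤ r {0, 3, 4} + r {2, 3, 4} :=
    key {0, 3, 4} {2, 3, 4} _ _ (by decide) (by decide) (by decide) (by decide)
  have m02 : r {0, 2} ≤ r {0, 2, 3, 4} := mono _ _ (by decide) (by decide)
  -- The point `3` is on the line `1`, so `4`, being parallel to `3`, would be as well.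
  have s1 : r {1, 3, 4} + r {3} ≤ r {1, 3} + r {3, 4} :=
    key {1, 3} {3, 4} _ _ (by decide) (by decide) (by decide) (by decide)
  have m14 : r {1, 4} ≤ r {1, 3, 4} := mono _ _ (by decide) (by decide)
  omega
end

section
/- Let A ∈ ℝ^{d×n} be a matrix of rank d and let M be the matroid on [n] whose bases are exactly the d-element subsets B ⊆ [n] with det(A[B]) ≠ 0. Suppose there exists v ∈ ℝ^n such that |det(A[B])| = ∏_{i∈B} exp(v_i) for every basis B of M. Then M is regular; that is, there exists a totally unimodular matrix A' ∈ ℝ^{d×n} such that the d-element subsets B with det(A'[B]) ≠ 0 are exactly the bases of M. -/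
/-!
Write `A[h]` for the `d × d` matrix with columns `h 0, …, h (d-1)` of `A`, for an arbitrary
`h : Fin d → Fin n`. Its determinant is `0` if `h` is not injective and `± minorDet A (image h)`
otherwise, so the hypothesis says `|det A[h]| = ∏ i, exp (v (h i))` whenever `det A[h] ≠ 0`.

Since `A` has rank `d`, some `A[b]` is invertible. Put `A' = D₁ * A[b]⁻¹ * A * D₂`, where
`D₂ = diag (exp (-v j))` and `D₁ = diag (exp (v (b i)))`. Every `det A'[h]` is a nonzero multiple of
`det A[h]`, so `A'` represents the same matroid, and the scaling makes `det A'[h] ∈ {-1, 0, 1}`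
(`det_scaled`,
`abs_det_submatrix_eq_prod`). Moreover `A'[b] = 1`.

A smaller minor of `A'`, with rows `f` and columns `g`, equals `det A'[h]`, where `h (f j) = g j` and
`h i = b i` for `i` outside the range of `f`: the added columns are standard basis vectors, so the
matrix is block triangular (`exists_det_submatrix_eq`). Hence `A'` is totally unimodular.
-/

/-- The determinant of the `d × d` submatrix `A[B]` of `A` with columns indexed by the
`d`-element subset `B` (in increasing order), and `0` if `B` does not have `d` elements. -/
noncomputable def minorDet {d n : ℕ} (A : Matrix (Fin d) (Fin n) ℝ) (B : Finset (Fin n)) : ℝ :=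
  if h : B.card = d then (A.submatrix id fun i => ((B.orderIsoOfFin h) i : Fin n)).det
  else 0

/-- A real matrix is totally unimodular if every square submatrix has determinant in
`{-1, 0, 1}`. -/
def IsTotUnimod {d n : ℕ} (A : Matrix (Fin d) (Fin n) ℝ) : Prop :=
  ∀ (k : ℕ) (f : Fin k → Fin d) (g : Fin k → Fin n),
    Function.Injective f → Function.Injective g →
      (A.submatrix f g).det ∈ ({-1, 0, 1} : Set ℝ)

lemma abs_det_submatrix_of_injective {d n : ℕ} (A : Matrix (Fin d) (Fin n) ℝ)
    (h : Fin d → Fin n) (hh : Function.Injective h) :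
    |(A.submatrix id h).det| = |minorDet A (Finset.univ.image h)| := by
  have hc : (Finset.univ.image h).card = d := by
    rw [Finset.card_image_of_injective _ hh, Finset.card_univ, Fintype.card_fin]
  set e := (Finset.univ.image h).orderIsoOfFin hc with he
  let s : Fin d → Fin d := fun i => e.symm ⟨h i, by simp⟩
  have hs : Function.Injective s := by
    intro i j hij
    have := e.symm.injective hij
    exact hh (by simpa using this)
  let σ : Equiv.Perm (Fin d) := Equiv.ofBijective s (Finite.injective_iff_bijective.mp hs)
  have hcomp : A.submatrix id h = (A.submatrix id fun i => (e i : Fin n)).submatrix id σ := by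
    ext i j
    simp [σ, s]
  have hm : minorDet A (Finset.univ.image h) = (A.submatrix id fun i => (e i : Fin n)).det := by
    unfold minorDet
    rw [dif_pos hc]
  rw [hm, hcomp, Matrix.det_permute', abs_mul]
  rcases Int.units_eq_one_or (Equiv.Perm.sign σ) with h1 | h1 <;> simp [h1]

lemma abs_det_submatrix_eq_prod {d n : ℕ} (A : Matrix (Fin d) (Fin n) ℝ) (v : Fin n → ℝ)
    (hv : ∀ B : Finset (Fin n), minorDet A B ≠ 0 →
      |minorDet A B| = ∏ i ∈ B, Real.exp (v i))
    (h : Fin d → Fin n) (h0 : (A.submatrix id h).det ≠ 0) :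
    |(A.submatrix id h).det| = ∏ i, Real.exp (v (h i)) := by
  have hh : Function.Injective h := by
    intro i j hij
    by_contra hne
    exact h0 (Matrix.det_zero_of_column_eq hne fun k => by simp [hij])
  have habs := abs_det_submatrix_of_injective A h hh
  rw [habs, hv, Finset.prod_image fun _ _ _ _ hxy => hh hxy]
  rwa [← abs_pos, ← habs, abs_pos]

lemma exists_det_submatrix_ne_zero {d n : ℕ} (A : Matrix (Fin d) (Fin n) ℝ)
    (hrk : A.rank = d) : ∃ b : Fin d → Fin n, (A.submatrix id b).det ≠ 0 := by
  obtain ⟨κ, a, ha, hspan, hli⟩ := exists_linearIndependent' ℝ A.col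
  have : Fintype κ := Fintype.ofInjective a ha
  have hcard : Fintype.card κ = d := by
    rw [← finrank_span_eq_card hli, hspan, ← Matrix.rank_eq_finrank_span_cols, hrk]
  let e : Fin d ≃ κ := (Fintype.equivFinOfCardEq hcard).symm
  refine ⟨a ∘ e, ?_⟩
  have h2 : LinearIndependent ℝ (A.submatrix id (a ∘ e)).col := hli.comp e e.injective
  rw [Matrix.linearIndependent_cols_iff_isUnit, Matrix.isUnit_iff_isUnit_det] at h2
  exact h2.ne_zero

/-- If `A'` contains the identity matrix on the columns `b`, every square minor of `A'` is the
determinant of `d` columns of `A'`. -/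
lemma exists_det_submatrix_eq {d n k : ℕ} (A' : Matrix (Fin d) (Fin n) ℝ) (b : Fin d → Fin n)
    (hb : A'.submatrix id b = 1) (f : Fin k → Fin d) (g : Fin k → Fin n)
    (hf : Function.Injective f) :
    ∃ h : Fin d → Fin n, (A'.submatrix f g).det = (A'.submatrix id h).det := by
  classical
  let p : Fin d → Prop := fun i => i ∈ Set.range f
  let h : Fin d → Fin n := fun i => if hi : p i then g hi.choose else b i
  have hfj : ∀ j, h (f j) = g j := by
    intro j
    have hp : p (f j) := ⟨j, rfl⟩
    simp only [h, dif_pos hp]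
    exact congrArg g (hf hp.choose_spec)
  have hnp : ∀ j, ¬ p j → ∀ i, A' i (h j) = (1 : Matrix (Fin d) (Fin d) ℝ) i j := by
    intro j hj i
    simp only [h, dif_neg hj]
    rw [← hb]; rfl
  refine ⟨h, ?_⟩
  rw [Matrix.twoBlockTriangular_det' (A'.submatrix id h) p]
  · have h1 : ((A'.submatrix id h).toSquareBlockProp fun i => ¬ p i) = 1 := by
      ext i j
      simp [Matrix.toSquareBlockProp, hnp j j.2, Matrix.one_apply, Subtype.ext_iff]
    let e : Fin k ≃ {i // p i} := Equiv.ofInjective f hf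
    have h2 : A'.submatrix f g = ((A'.submatrix id h).toSquareBlockProp p).submatrix e e := by
      ext i j
      change A' (f i) (g j) = A' (f i) (h (f j))
      rw [hfj]
    rw [h1, Matrix.det_one, mul_one, h2]
    convert Matrix.det_submatrix_equiv_self e _
  · intro i hi j hj
    have hij : i ≠ j := fun he => hj (he ▸ hi)
    simp [hnp j hj, hij]

lemma det_scaled {d n : ℕ} (A : Matrix (Fin d) (Fin n) ℝ) (w : Fin d → ℝ) (u : Fin n → ℝ)
    (N : Matrix (Fin d) (Fin d) ℝ) (h : Fin d → Fin n) :
    ((Matrix.diagonal w * N * A * Matrix.diagonal u).submatrix id h).det =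
      (∏ i, w i) * N.det * (A.submatrix id h).det * ∏ i, u (h i) := by
  have : (Matrix.diagonal w * N * A * Matrix.diagonal u).submatrix id h =
      Matrix.diagonal w * N * A.submatrix id h * Matrix.diagonal (u ∘ h) := by
    ext i j
    simp only [Matrix.submatrix_apply, Matrix.mul_diagonal, Function.comp, id]
    rfl
  rw [this]
  simp [Matrix.det_mul, Matrix.det_diagonal]

/-- let `A ∈ ℝ^{d×n}` have rank `d` and let `M` be the matroid whose bases
are the `d`-element column sets `B` with `det A[B] ≠ 0`. If there is `v ∈ ℝ^n` with
`|det A[B]| = ∏_{i ∈ B} exp(v_i)` for every basis `B`, then `M` is regular: some totally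
unimodular matrix `A'` represents `M`. -/
theorem regular_of_minors_product_form {d n : ℕ} (A : Matrix (Fin d) (Fin n) ℝ)
    (hrk : A.rank = d) (v : Fin n → ℝ)
    (hv : ∀ B : Finset (Fin n), minorDet A B ≠ 0 →
      |minorDet A B| = ∏ i ∈ B, Real.exp (v i)) :
    ∃ A' : Matrix (Fin d) (Fin n) ℝ, IsTotUnimod A' ∧
      ∀ B : Finset (Fin n), minorDet A' B ≠ 0 ↔ minorDet A B ≠ 0 := by
  obtain ⟨b, hb⟩ := exists_det_submatrix_ne_zero A hrk
  let N := (A.submatrix id b)⁻¹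
  have hN : N.det = (A.submatrix id b).det⁻¹ := by
    rw [Matrix.det_nonsing_inv, Ring.inverse_eq_inv']
  let A' : Matrix (Fin d) (Fin n) ℝ :=
    Matrix.diagonal (fun i => Real.exp (v (b i))) * N * A *
      Matrix.diagonal (fun j => Real.exp (-v j))
  have hdet : ∀ h : Fin d → Fin n, (A'.submatrix id h).det =
      (∏ i, Real.exp (v (b i))) * N.det * (A.submatrix id h).det *
        ∏ i, Real.exp (-v (h i)) := fun h => det_scaled A _ _ N h
  have hpos : ∀ u : Fin d → ℝ, (∏ i, Real.exp (u i)) ≠ 0 := fun u =>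
    Finset.prod_ne_zero_iff.mpr fun i _ => (Real.exp_pos _).ne'
  have hone : A'.submatrix id b = 1 := by
    have hNb : N * A.submatrix id b = 1 := Matrix.nonsing_inv_mul _ hb.isUnit
    ext i j
    have hij : (N * A) i (b j) = (1 : Matrix (Fin d) (Fin d) ℝ) i j := by
      rw [← hNb]; rfl
    simp only [A', Matrix.submatrix_apply, Matrix.mul_assoc,
      Matrix.diagonal_mul, id]
    rw [← Matrix.mul_assoc, Matrix.mul_diagonal, hij, Matrix.one_apply]
    split_ifs with he
    · subst he
      rw [one_mul, ← Real.exp_add]; simp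
    · simp
  have hunit : ∀ h : Fin d → Fin n, (A'.submatrix id h).det ∈ ({-1, 0, 1} : Set ℝ) := by
    intro h
    by_cases h0 : (A.submatrix id h).det = 0
    · simp [hdet, h0]
    · have habs : |(A'.submatrix id h).det| = 1 := by
        rw [hdet, abs_mul, abs_mul, abs_mul, abs_det_submatrix_eq_prod A v hv h h0, hN, abs_inv,
          abs_det_submatrix_eq_prod A v hv b hb,
          abs_of_pos (Finset.prod_pos fun i _ => Real.exp_pos _),
          abs_of_pos (Finset.prod_pos fun i _ => Real.exp_pos _), mul_inv_cancel₀ (hpos _),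
          one_mul, ← Finset.prod_mul_distrib]
        simp [← Real.exp_add]
      rcases eq_or_eq_neg_of_abs_eq habs with h1 | h1 <;> simp [h1]
  refine ⟨A', ?_, ?_⟩
  · intro k f g hf _
    obtain ⟨h, hh⟩ := exists_det_submatrix_eq A' b hone f g hf
    rw [hh]
    exact hunit h
  · intro B
    unfold minorDet
    split_ifs with hB
    · rw [hdet]
      have hN0 : N.det ≠ 0 := by rw [hN]; exact inv_ne_zero hb
      simp only [ne_eq, mul_eq_zero, hpos, hN0, or_false, false_or]
    · rfl
end

section
/- Let A be the real 4×8 matrix with rows (1,0,0,0,0,1,1,2), (0,1,0,0,1,0,1,1), (0,0,1,0,1,1,0,1), (0,0,0,1,2,1,1,0), with columns labeled 0,…,7, and let the bases of the matroid P₈ be the 4-element subsets B ⊆ {0,…,7} with det(A[B]) ≠ 0. For each basis B set v_B = log₂|det(A[B])|. For real numbers a, b > 0 define F_{a,b} = ∑_{B basis of P₈} b^{v_B}·∏_{i∈B} x_i + a·x₃x₅x₆x₇. Then for no choice of a, b > 0 is the polynomial F_{a,b} stable. -/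
/-!
The proof exhibits a zero of `F_{a,b}` in the product of upper half-planes. Specializing
`x = (1, 1, x₂, -1, x₄, -1, -1, 1)` gives `F_{a,b} = (1 - x₂) (1 + 2 b + x₄) - a`
(`delTwo_special`, `conTwo_special`), so for `x₄ = I` the unique root is
`x₂ = 1 - a / (1 + 2 b + I)`, whose imaginary part is positive because `a > 0`. The other six coordinates are real there. Since
`F_{a,b}` has degree one in `x₂`, its root in `x₂` is a quotient of polynomials in the remaining
coordinates and depends continuously on them near this point; shifting the six real coordinates
by `ε I` with `ε > 0` small therefore keeps the root in the upper half-plane.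

The explicit form of `F_{a,b}` comes from `aeval_Fab`: the sum over bases becomes a sum over all
four-element subsets, whose minors are integers in `{0, ±1, ±2, ±4}`, contributing the
coefficients `0, 1, b, b²`.
-/

open scoped Classical

/-- The representing matrix of the matroid `P₈`. -/
noncomputable def matP8 : Matrix (Fin 4) (Fin 8) ℝ :=
  !![1, 0, 0, 0, 0, 1, 1, 2;
     0, 1, 0, 0, 1, 0, 1, 1;
     0, 0, 1, 0, 1, 1, 0, 1;
     0, 0, 0, 1, 2, 1, 1, 0]

/-- The polynomial `F_{a,b} = ∑_{B basis of P₈} b^{log₂ |det A[B]|} x^B + a·x₃x₅x₆x₇`. -/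
noncomputable def Fab (a b : ℝ) : MvPolynomial (Fin 8) ℝ :=
  (∑ B ∈ Finset.univ.filter (fun B : Finset (Fin 8) => minorDet matP8 B ≠ 0),
    MvPolynomial.C (b ^ (Real.logb 2 |minorDet matP8 B|)) * ∏ i ∈ B, MvPolynomial.X i) +
  MvPolynomial.C a *
    (MvPolynomial.X 3 * MvPolynomial.X 5 * MvPolynomial.X 6 * MvPolynomial.X 7)

/-! ### Minors of the representing matrix -/

/-- The integer matrix whose real cast is `matP8`. -/
def matZ : Matrix (Fin 4) (Fin 8) ℤ :=
  !![1, 0, 0, 0, 0, 1, 1, 2;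
     0, 1, 0, 0, 1, 0, 1, 1;
     0, 0, 1, 0, 1, 1, 0, 1;
     0, 0, 0, 1, 2, 1, 1, 0]

/-- The minor of `matZ` on the columns `i, j, k, l`, as a Laplace expansion along the first two
rows, so that it evaluates by `decide`. -/
def quadDet (i j k l : Fin 8) : ℤ :=
  let p := fun u v => matZ 0 u * matZ 1 v - matZ 0 v * matZ 1 u
  let q := fun u v => matZ 2 u * matZ 3 v - matZ 2 v * matZ 3 u
  p i j * q k l - p i k * q j l + p i l * q j k + p j k * q i l - p j l * q i k + p k l * q i j

lemma matP8_eq : matP8 = matZ.map (Int.cast : ℤ → ℝ) := by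
  ext i j
  fin_cases i <;> fin_cases j <;> simp [matP8, matZ]

/-- The columns enter `minorDet` through the increasing enumeration of the subset, which is
`i, j, k, l`. -/
lemma minorDet_quad {i j k l : Fin 8} (hij : i < j) (hjk : j < k) (hkl : k < l) :
    minorDet matP8 {i, j, k, l} = (quadDet i j k l : ℝ) := by
  have hcard : ({i, j, k, l} : Finset (Fin 8)).card = 4 := by
    rw [Finset.card_insert_of_notMem, Finset.card_insert_of_notMem,
      Finset.card_insert_of_notMem, Finset.card_singleton] <;> grind
  have hmono : StrictMono ![i, j, k, l] := by
    rw [Fin.strictMono_iff_lt_succ]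
    intro m
    fin_cases m
    · exact hij
    · exact hjk
    · exact hkl
  have hemb := Finset.orderEmbOfFin_unique hcard (f := ![i, j, k, l])
    (by intro m; fin_cases m <;> simp) hmono
  have hcols : (fun m => (({i, j, k, l} : Finset (Fin 8)).orderIsoOfFin hcard m : Fin 8))
      = ![i, j, k, l] := by
    rw [hemb]
    rfl
  rw [minorDet, dif_pos hcard, hcols, matP8_eq]
  simp [Matrix.det_succ_row_zero, Fin.sum_univ_succ, quadDet, Fin.succAbove]
  ring

/-! ### The polynomial as an explicit sum -/

/-- The coefficient `b ^ log₂ |n|` of a subset with minor `n`, and `0` if that subset is not a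
basis, i.e. if `n = 0`. -/
noncomputable def wt (b : ℝ) (n : ℤ) : ℝ :=
  if n = 0 then 0 else b ^ Real.logb 2 |(n : ℝ)|

lemma wt_of_zero (b : ℝ) {n : ℤ} (h : n = 0) : wt b n = 0 := by simp [wt, h]

lemma wt_of_one (b : ℝ) {n : ℤ} (h : n = 1 ∨ n = -1) : wt b n = 1 := by
  rcases h with rfl | rfl <;> simp [wt]

lemma wt_of_two (b : ℝ) {n : ℤ} (h : n = 2 ∨ n = -2) : wt b n = b := by
  rcases h with rfl | rfl <;> simp [wt]

lemma wt_of_four (b : ℝ) {n : ℤ} (h : n = 4 ∨ n = -4) : wt b n = b ^ 2 := by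
  have h4 : Real.logb 2 4 = 2 := by
    rw [show (4 : ℝ) = 2 ^ (2 : ℝ) by norm_num]
    exact Real.logb_rpow (by norm_num) (by norm_num)
  rcases h with rfl | rfl <;> simp [wt, h4]

lemma sum_powersetCard_succ_insert {α : Type*} [DecidableEq α] {x : α} {s : Finset α}
    (hx : x ∉ s) (n : ℕ) (f : Finset α → ℂ) :
    ∑ B ∈ (insert x s).powersetCard (n + 1), f B
      = ∑ B ∈ s.powersetCard (n + 1), f B + ∑ B ∈ s.powersetCard n, f (insert x B) := by
  rw [Finset.powersetCard_succ_insert hx, Finset.sum_union, Finset.sum_image]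
  · intro B hB C hC h
    have hB' := (Finset.mem_powersetCard.1 hB).1
    have hC' := (Finset.mem_powersetCard.1 hC).1
    rw [← Finset.erase_insert (fun h => hx (hB' h)), h,
      Finset.erase_insert (fun h => hx (hC' h))]
  · rw [Finset.disjoint_left]
    intro B hB hB'
    obtain ⟨C, -, rfl⟩ := Finset.mem_image.1 hB'
    exact hx ((Finset.mem_powersetCard.1 hB).1 (Finset.mem_insert_self x C))

lemma sum_powersetCard_succ_empty {α : Type*} (n : ℕ) (f : Finset α → ℂ) :
    ∑ B ∈ (∅ : Finset α).powersetCard (n + 1), f B = 0 := by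
  rw [Finset.powersetCard_eq_empty.2 (by simp), Finset.sum_empty]

/-- The term of `F_{a,b}(z)` belonging to a subset `B`, with value `0` off the bases. -/
noncomputable def basisTerm (b : ℝ) (z : Fin 8 → ℂ) (B : Finset (Fin 8)) : ℂ :=
  if minorDet matP8 B ≠ 0 then
    ((b ^ Real.logb 2 |minorDet matP8 B| : ℝ) : ℂ) * ∏ i ∈ B, z i else 0

lemma basisTerm_quad (b : ℝ) (z : Fin 8 → ℂ) {i j k l : Fin 8}
    (hij : i < j) (hjk : j < k) (hkl : k < l) :
    basisTerm b z {i, j, k, l} = wt b (quadDet i j k l) * (z i * z j * z k * z l) := by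
  rw [basisTerm, minorDet_quad hij hjk hkl, Finset.prod_insert (by grind),
    Finset.prod_insert (by grind), Finset.prod_insert (by grind), Finset.prod_singleton]
  by_cases h : quadDet i j k l = 0
  · simp [h, wt]
  · simp only [wt, h, ne_eq, Int.cast_eq_zero, not_false_eq_true, if_true, if_false]
    ring

lemma aeval_Fab (a b : ℝ) (z : Fin 8 → ℂ) :
    MvPolynomial.aeval z (Fab a b) =
      ∑ B ∈ (Finset.univ : Finset (Fin 8)).powersetCard 4, basisTerm b z B
        + a * (z 3 * z 5 * z 6 * z 7) := by
  have hsub : ∑ B ∈ (Finset.univ : Finset (Fin 8)).powersetCard 4, basisTerm b z B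
      = ∑ B : Finset (Fin 8), basisTerm b z B := by
    apply Finset.sum_subset (Finset.subset_univ _)
    intro B _ hB
    have hcard : B.card ≠ 4 := fun h => hB (Finset.mem_powersetCard.2 ⟨Finset.subset_univ _, h⟩)
    simp [basisTerm, minorDet, hcard]
  rw [hsub]
  simp only [basisTerm, ← Finset.sum_filter]
  simp [Fab, map_sum, map_prod]

/-- The part of `F_{a,b}` free of `x₂`. -/
noncomputable def delTwo (a b x0 x1 x3 x4 x5 x6 x7 : ℂ) : ℂ :=
  (x0 * x1 * x3 * x4 + x0 * x1 * x3 * x5 + x0 * x1 * x3 * x7 + x0 * x1 * x4 * x5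
      + x0 * x1 * x4 * x6 + x0 * x1 * x5 * x6 + x0 * x1 * x5 * x7 + x0 * x1 * x6 * x7
      + x0 * x3 * x4 * x5 + x0 * x3 * x4 * x6 + x0 * x3 * x5 * x6 + x0 * x3 * x5 * x7
      + x0 * x3 * x6 * x7 + x1 * x3 * x4 * x5 + x1 * x3 * x4 * x6 + x1 * x3 * x5 * x6
      + x1 * x3 * x5 * x7 + x1 * x3 * x6 * x7)
    + b * (x0 * x1 * x4 * x7 + x0 * x4 * x5 * x7 + x0 * x4 * x6 * x7 + x0 * x5 * x6 * x7
      + x1 * x3 * x4 * x7 + x1 * x4 * x5 * x6 + x1 * x5 * x6 * x7 + x3 * x4 * x5 * x6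
      + x3 * x4 * x5 * x7 + x3 * x4 * x6 * x7)
    + b ^ 2 * (x1 * x4 * x6 * x7 + x4 * x5 * x6 * x7)
    + a * (x3 * x5 * x6 * x7)

/-- The coefficient of `x₂` in `F_{a,b}`. -/
noncomputable def conTwo (b x0 x1 x3 x4 x5 x6 x7 : ℂ) : ℂ :=
  (x0 * x1 * x3 + x0 * x1 * x5 + x0 * x1 * x6 + x0 * x3 * x4 + x0 * x3 * x6
      + x0 * x3 * x7 + x0 * x4 * x5 + x0 * x4 * x6 + x0 * x5 * x6 + x0 * x5 * x7
      + x0 * x6 * x7 + x1 * x3 * x5 + x1 * x3 * x6 + x3 * x4 * x5 + x3 * x4 * x6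
      + x3 * x5 * x6 + x3 * x5 * x7 + x3 * x6 * x7)
    + b * (x0 * x1 * x4 + x0 * x4 * x7 + x1 * x3 * x7 + x1 * x4 * x5 + x1 * x4 * x6
      + x1 * x5 * x7 + x1 * x6 * x7 + x3 * x4 * x7 + x4 * x5 * x6 + x5 * x6 * x7)
    + b ^ 2 * (x1 * x4 * x7 + x4 * x5 * x7)

/-- `F_{a,b}` as a polynomial of degree one in `x₂`. -/
lemma aeval_Fab_eq (a b : ℝ) (z : Fin 8 → ℂ) :
    MvPolynomial.aeval z (Fab a b) =
      delTwo a b (z 0) (z 1) (z 3) (z 4) (z 5) (z 6) (z 7)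
        + z 2 * conTwo b (z 0) (z 1) (z 3) (z 4) (z 5) (z 6) (z 7) := by
  rw [aeval_Fab, show (Finset.univ : Finset (Fin 8)) =
    insert 0 (insert 1 (insert 2 (insert 3 (insert 4 (insert 5 (insert 6 (insert 7 ∅))))))) by
      decide]
  simp (discharger := decide) only [sum_powersetCard_succ_insert, Finset.powersetCard_zero,
    Finset.sum_singleton, sum_powersetCard_succ_empty, zero_add]
  simp only [insert_empty_eq]
  simp (discharger := decide) only [basisTerm_quad]
  -- `decide` evaluates each integer minor, which selects the coefficient `0`, `1`, `b` or `b ^ 2`.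
  simp (discharger := decide) only [wt_of_zero, wt_of_one, wt_of_two, wt_of_four]
  simp only [delTwo, conTwo]
  push_cast
  ring

/-! ### A zero in the upper half-plane -/

/-- Together with `conTwo_special`, this says that `F_{a,b} = (1 - x₂) (1 + 2 b + w) - a` at
`x = (1, 1, x₂, -1, w, -1, -1, 1)`. -/
lemma delTwo_special (a b w : ℂ) : delTwo a b 1 1 (-1) w (-1) (-1) 1 = 1 + 2 * b + w - a := by
  simp only [delTwo]
  ring

lemma conTwo_special (b w : ℂ) : conTwo b 1 1 (-1) w (-1) (-1) 1 = -(1 + 2 * b + w) := by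
  simp only [conTwo]
  ring

open Filter Topology

/-- for no `a, b > 0` is the polynomial `F_{a,b}` stable. -/
theorem Fab_not_stable : ∀ a b : ℝ, 0 < a → 0 < b → ¬ IsStablePoly (Fab a b) := by
  intro a b ha _ hstable
  -- The two parts of `F_{a,b}` after shifting the six real coordinates by `ε I`, with `x₄ = I`.
  let P : ℝ → ℂ := fun ε => delTwo a b (1 + ε * Complex.I) (1 + ε * Complex.I)
    (-1 + ε * Complex.I) Complex.I (-1 + ε * Complex.I) (-1 + ε * Complex.I) (1 + ε * Complex.I)
  let Q : ℝ → ℂ := fun ε => conTwo b (1 + ε * Complex.I) (1 + ε * Complex.I)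
    (-1 + ε * Complex.I) Complex.I (-1 + ε * Complex.I) (-1 + ε * Complex.I) (1 + ε * Complex.I)
  have hP : Continuous P := by
    simp only [P, delTwo]
    fun_prop
  have hQ : Continuous Q := by
    simp only [Q, conTwo]
    fun_prop
  have hP0 : P 0 = 1 + 2 * b + Complex.I - a := by
    simp only [P, Complex.ofReal_zero, zero_mul, add_zero, delTwo_special]
  have hQ0 : Q 0 = -(1 + 2 * b + Complex.I) := by
    simp only [Q, Complex.ofReal_zero, zero_mul, add_zero, conTwo_special]
  have hQ0_ne : Q 0 ≠ 0 := by
    intro h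
    have him := congrArg Complex.im h
    simp [hQ0] at him
  have hroot : 0 < (-P 0 / Q 0).im := by
    have hne : (1 + 2 * b + Complex.I : ℂ) ≠ 0 := by
      intro h
      exact hQ0_ne (by rw [hQ0, h, neg_zero])
    have hval : -P 0 / Q 0 = 1 - a * (1 + 2 * b + Complex.I : ℂ)⁻¹ := by
      rw [hP0, hQ0]
      field_simp
    have hnorm : 0 < Complex.normSq (1 + 2 * b + Complex.I) := Complex.normSq_pos.2 hne
    rw [hval]
    simp only [Complex.sub_im, Complex.one_im, Complex.im_ofReal_mul, Complex.inv_im]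
    have him : (1 + 2 * b + Complex.I : ℂ).im = 1 := by simp
    rw [him, neg_div, mul_neg, zero_sub, neg_neg]
    positivity
  have hcont : ContinuousAt (fun ε => (-P ε / Q ε).im) 0 :=
    Complex.continuous_im.continuousAt.comp
      (hP.neg.continuousAt.div hQ.continuousAt hQ0_ne)
  have hev : ∀ᶠ ε in 𝓝[>] (0 : ℝ), 0 < (-P ε / Q ε).im ∧ Q ε ≠ 0 :=
    ((hcont.eventually_const_lt hroot).and
      (hQ.continuousAt.eventually_ne hQ0_ne)).filter_mono nhdsWithin_le_nhds
  obtain ⟨ε, ⟨hpos, hne⟩, hε⟩ := (hev.and self_mem_nhdsWithin).exists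
  refine hstable ![1 + ε * Complex.I, 1 + ε * Complex.I, -P ε / Q ε, -1 + ε * Complex.I,
    Complex.I, -1 + ε * Complex.I, -1 + ε * Complex.I, 1 + ε * Complex.I] ?_ ?_
  · intro i
    fin_cases i
    all_goals first | exact hpos | simp [hε]
  · rw [aeval_Fab_eq]
    change P ε + -P ε / Q ε * Q ε = 0
    rw [div_mul_cancel₀ _ hne, add_neg_cancel]
end

section
/- Let A be the real 3×7 matrix with rows (1,1,0,0,0,1,1), (0,1,1,1,0,0,1), (0,0,0,1,1,1,1), with columns labeled 1,…,7. Then the polynomial ∑_{S ∈ binom([7],3)} |det(A[S])|·∏_{i∈S} x_i ∈ ℝ[x₁,…,x₇], where the sum is over all 3-element subsets S of {1,…,7}, is not stable. -/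
/-- The representing matrix of the non-Fano matroid. -/
noncomputable def matNonFano : Matrix (Fin 3) (Fin 7) ℝ :=
  !![1, 1, 0, 0, 0, 1, 1;
     0, 1, 1, 1, 0, 0, 1;
     0, 0, 0, 1, 1, 1, 1]

/-- The entries of `matNonFano` as integers. -/
def intNonFano : Matrix (Fin 3) (Fin 7) ℤ :=
  !![1, 1, 0, 0, 0, 1, 1;
     0, 1, 1, 1, 0, 0, 1;
     0, 0, 0, 1, 1, 1, 1]

/-- The minor of `intNonFano` on the columns `i, j, k`, in expanded form so that it can be
evaluated in the kernel. -/
def intMinor (i j k : Fin 7) : ℤ :=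
  intNonFano 0 i * intNonFano 1 j * intNonFano 2 k
    - intNonFano 0 i * intNonFano 1 k * intNonFano 2 j
    - intNonFano 0 j * intNonFano 1 i * intNonFano 2 k
    + intNonFano 0 j * intNonFano 1 k * intNonFano 2 i
    + intNonFano 0 k * intNonFano 1 i * intNonFano 2 j
    - intNonFano 0 k * intNonFano 1 j * intNonFano 2 i

/-- The zero of the polynomial in the open upper half-plane, with coordinates in `ℤ[i]`. -/
def gaussianZero : Fin 7 → GaussianInt :=
  ![⟨8, 1⟩, ⟨-7, 1⟩, ⟨8, 1⟩, ⟨-7, 1⟩, ⟨8, 1⟩, ⟨-7, 1⟩, ⟨48, 21⟩]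

/-- The increasing triples of column indices. -/
def increasingTriples : Finset (Fin 7 × Fin 7 × Fin 7) :=
  Finset.univ.filter fun t => t.1 < t.2.1 ∧ t.2.1 < t.2.2

lemma matNonFano_apply (r : Fin 3) (c : Fin 7) : matNonFano r c = (intNonFano r c : ℝ) := by
  fin_cases r <;> fin_cases c <;> simp [matNonFano, intNonFano]

lemma minorDet_triple {i j k : Fin 7} (hij : i < j) (hjk : j < k) :
    minorDet matNonFano {i, j, k} = (intMinor i j k : ℝ) := by
  have hcard : ({i, j, k} : Finset (Fin 7)).card = 3 :=
    Finset.card_eq_three.2 ⟨i, j, k, hij.ne, (hij.trans hjk).ne, hjk.ne, rfl⟩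
  have hmono : StrictMono ![i, j, k] := by
    rw [Fin.strictMono_iff_lt_succ]
    intro r
    fin_cases r
    · exact hij
    · exact hjk
  have hemb := Finset.orderEmbOfFin_unique hcard (f := ![i, j, k])
    (by intro r; fin_cases r <;> simp) hmono
  have hcol : (fun r => (({i, j, k} : Finset (Fin 7)).orderIsoOfFin hcard r : Fin 7))
      = ![i, j, k] := by
    rw [hemb]; rfl
  rw [minorDet, dif_pos hcard, hcol, Matrix.det_fin_three]
  simp [matNonFano_apply, intMinor]

lemma sum_powersetCard_three {M : Type*} [AddCommMonoid M] (f : Finset (Fin 7) → M) :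
    ∑ S ∈ Finset.univ.powersetCard 3, f S
      = ∑ t ∈ increasingTriples, f {t.1, t.2.1, t.2.2} := by
  have himage : (Finset.univ : Finset (Fin 7)).powersetCard 3
      = increasingTriples.image fun t => {t.1, t.2.1, t.2.2} := by
    decide +kernel
  have hinj : ∀ s ∈ increasingTriples, ∀ t ∈ increasingTriples,
      ({s.1, s.2.1, s.2.2} : Finset (Fin 7)) = {t.1, t.2.1, t.2.2} → s = t := by
    decide +kernel
  rw [himage, Finset.sum_image hinj]

lemma gaussian_sum_eq_zero :
    ∑ t ∈ increasingTriples, ((|intMinor t.1 t.2.1 t.2.2| : ℤ) : GaussianInt)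
      * (gaussianZero t.1 * (gaussianZero t.2.1 * gaussianZero t.2.2)) = 0 := by
  decide +kernel

/-- the polynomial `∑_{S ∈ binom([7],3)} |det A[S]| ∏_{i ∈ S} x_i`, where
`A` is the representing matrix of the non-Fano matroid, is not stable. -/
theorem nonFano_absdet_not_stable :
    ¬ IsStablePoly
      (∑ S ∈ Finset.univ.powersetCard 3,
        MvPolynomial.C |minorDet matNonFano S| * ∏ i ∈ S, MvPolynomial.X i) := by
  intro h
  refine h (fun i => GaussianInt.toComplex (gaussianZero i)) ?_ ?_
  · intro i
    fin_cases i <;> simp [gaussianZero, GaussianInt.toComplex_def]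
  · rw [sum_powersetCard_three, map_sum, ← map_zero GaussianInt.toComplex,
      ← gaussian_sum_eq_zero, map_sum]
    refine Finset.sum_congr rfl fun t ht => ?_
    obtain ⟨hij, hjk⟩ := (Finset.mem_filter.1 ht).2
    have hi : t.1 ∉ ({t.2.1, t.2.2} : Finset (Fin 7)) := by
      simp [hij.ne, (hij.trans hjk).ne]
    rw [minorDet_triple hij hjk, Finset.prod_insert hi, Finset.prod_pair hjk.ne]
    simp [← Int.cast_abs]
end
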